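/- (Energy inequality and energy conservation.) Let the collision kernel b : (0, π/2] → [0,∞) be measurable and satisfy, for some α₀ ∈ (0,2], ∫₀^{π/2} sin^{α₀}(θ/2) · b(cos θ) · sin θ dθ < ∞. Let F₀ be a Borel probability measure on ℝ³ with ∫ |v|² dF₀(v) < ∞, and let (F_t)_{t≥0} be a family of Borel probability measures on ℝ³ whose characteristic functions ψ(t,·) form a solution of the Fourier-transformed (Bobylev) homogeneous Boltzmann Cauchy problem with initial datum the characteristic function of F₀, continuous in t with values in 𝒦². Then for every t > 0: ∫_{ℝ³} |v|² dF_t(v) ≤ ∫_{ℝ³} |v|² dF₀(v). If moreover α₀ ≤ 1, then equality holds for every t > 0 (the energy is conserved). -/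

import Mathlib

noncomputable section

open MeasureTheory Real Filter Metric Set
open scoped RealInnerProductSpace Topology

/-- ℝ³ as a Euclidean space. -/
abbrev E3 : Type := EuclideanSpace ℝ (Fin 3)

/-- The surface measure on the unit sphere S² ⊂ ℝ³. -/
def sphμ : Measure (sphere (0 : E3) 1) := (volume : Measure E3).toSphere

/-- The characteristic function (Fourier transform) of a Borel measure on ℝ³,
`ψ(ξ) = ∫ e^{-i v·ξ} dΨ(v)`. -/
def charFn (Ψ : Measure E3) (ξ : E3) : ℂ :=
  ∫ v, Complex.exp (-(Complex.I * (⟪v, ξ⟫ : ℂ))) ∂Ψ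

/-- `ψ` is a characteristic function of some Borel probability measure on ℝ³. -/
def IsCharFn (ψ : E3 → ℂ) : Prop :=
  ∃ Ψ : Measure E3, IsProbabilityMeasure Ψ ∧ ψ = charFn Ψ

/-- Finiteness of `‖φ - 1‖_α`, i.e. the quantitative part of membership in `𝒦^α`. -/
def KBdd (α : ℝ) (φ : E3 → ℂ) : Prop :=
  ∃ C : ℝ, ∀ ξ : E3, ξ ≠ 0 → ‖φ ξ - 1‖ ≤ C * ‖ξ‖ ^ α

/-- Membership in the space `𝒦^α`. -/
def memK (α : ℝ) (φ : E3 → ℂ) : Prop := IsCharFn φ ∧ KBdd α φ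

/-- The distance `‖φ - φ'‖_α = sup_{ξ ≠ 0} |φ(ξ) - φ'(ξ)|/|ξ|^α` on `𝒦^α`. -/
def Kdist (α : ℝ) (φ φ' : E3 → ℂ) : ℝ :=
  ⨆ ξ : {ξ : E3 // ξ ≠ 0}, ‖φ ξ.1 - φ' ξ.1‖ / ‖(ξ.1 : E3)‖ ^ α

/-- `ξ⁺ = ξ/2 + (|ξ|/2)σ`. -/
def xiPlus (ξ : E3) (σ : sphere (0 : E3) 1) : E3 := (1/2 : ℝ) • ξ + (‖ξ‖ / 2) • (σ : E3)

/-- `ξ⁻ = ξ/2 - (|ξ|/2)σ`. -/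
def xiMinus (ξ : E3) (σ : sphere (0 : E3) 1) : E3 := (1/2 : ℝ) • ξ - (‖ξ‖ / 2) • (σ : E3)

/-- The Bobylev collision integrand at time `t`, frequency `ξ`, direction `σ`. -/
def bobylevIntegrand (b : ℝ → ℝ) (ψ : ℝ → E3 → ℂ) (t : ℝ) (ξ : E3)
    (σ : sphere (0 : E3) 1) : ℂ :=
  (b (⟪ξ, (σ : E3)⟫ / ‖ξ‖) : ℂ) *
    (ψ t (xiPlus ξ σ) * ψ t (xiMinus ξ σ) - ψ t ξ)

/-- `ψ : [0,∞) × ℝ³ → ℂ` is a solution of the Fourier-transformed (Bobylev)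
homogeneous Boltzmann Cauchy problem with collision kernel `b` and initial datum `ψ₀`. -/
structure IsBobylevSolution (b : ℝ → ℝ) (ψ : ℝ → E3 → ℂ) (ψ₀ : E3 → ℂ) : Prop where
  cont : ContinuousOn (fun p : ℝ × E3 => ψ p.1 p.2) (Set.Ici 0 ×ˢ Set.univ)
  init : ψ 0 = ψ₀
  isCharFn : ∀ t ≥ 0, IsCharFn (ψ t)
  integrable : ∀ t ≥ 0, ∀ ξ : E3, Integrable (bobylevIntegrand b ψ t ξ) sphμ
  eq : ∀ t ≥ 0, ∀ ξ : E3, HasDerivWithinAt (fun τ => ψ τ ξ)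
      (∫ σ, bobylevIntegrand b ψ t ξ σ ∂sphμ) (Set.Ici 0) t

/-- Continuity of `t ↦ ψ(t,·)` from `[0,∞)` into the metric space `(𝒦^α, ‖·‖_α)`. -/
def KContinuous (α : ℝ) (ψ : ℝ → E3 → ℂ) : Prop :=
  ∀ t₀ ∈ Set.Ici (0:ℝ), Tendsto (fun t => Kdist α (ψ t) (ψ t₀)) (𝓝[Set.Ici (0:ℝ)] t₀) (𝓝 0)

/-- The angular singularity assumption `b(cos θ) θ^{2+2s} → K` as `θ → 0+`. -/
def KernelSingular (b : ℝ → ℝ) (s K : ℝ) : Prop :=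
  Tendsto (fun θ : ℝ => b (Real.cos θ) * θ ^ (2 + 2*s)) (𝓝[>] 0) (𝓝 K)

/-!
The sum `∑ᵢ (ψ(t, r eᵢ) - 1) / r²` over an orthonormal basis tends to `-½ ∫ |v|² dF_t` as `r → 0`,
so it suffices that its time derivative, the corresponding sum of collision integrals, tends to `0`
boundedly. The quadratic part of the collision integral at `r e`, averaged over the azimuthal angle
about `e`, is a multiple of `∫ |v|² dF - 3 ∫ ⟨v, e⟩² dF`, which sums to `0` over the basis.
Averaging over the four quarter turns about `e` already produces this, with a remainder
`o(r²) (1 - ⟨e, σ⟩²)`; this settles the case where `∫ b(e·σ) (1 - (e·σ)²) dσ` converges.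

If that integral diverges, integrability of the collision integrand forces
`ψ(ξ⁺) ψ(ξ⁻) - ψ(ξ)` to be arbitrarily small compared with `|ξ⁺|² |ξ⁻|²` for suitable `σ`. The orbit
expansion then makes the second moments isotropic, and a maximum principle for `|ψ - g|`, with `g`
the Gaussian of the same second moments, gives `ψ = g`, for which the collision integral vanishes.
-/

section MixedDifference

variable {E : Type*} [NormedAddCommGroup E] [NormedSpace ℝ E] {f f' : ℝ → E} {S : Set ℝ} {L : ℝ}

theorem norm_mixedDifference_le (hS : Convex ℝ S) (hf : ∀ x ∈ S, HasDerivWithinAt f (f' x) S x)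
    (hL : ∀ x ∈ S, ∀ y ∈ S, ‖f' x - f' y‖ ≤ L * |x - y|) {p a b : ℝ} (hp : p ∈ S)
    (ha : p + a ∈ S) (hb : p + b ∈ S) (hab : p + a + b ∈ S) :
    ‖f (p + a + b) - f (p + a) - f (p + b) + f p‖ ≤ L * |a| * |b| := by
  let T : Set ℝ := S ∩ (· + b) ⁻¹' S
  have hT : Convex ℝ T := hS.inter (hS.translate_preimage_left b)
  have hderiv : ∀ τ ∈ T, HasDerivWithinAt (fun τ => f (τ + b) - f τ) (f' (τ + b) - f' τ) T τ := by
    intro τ hτ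
    refine HasDerivWithinAt.sub ?_ ((hf τ hτ.1).mono inter_subset_left)
    simpa [Function.comp_def] using (hf (τ + b) hτ.2).scomp τ
      ((hasDerivWithinAt_id τ T).add_const b) fun _ h => h.2
  have hbound : ∀ τ ∈ T, ‖f' (τ + b) - f' τ‖ ≤ L * |b| := fun τ hτ => by
    simpa using hL (τ + b) hτ.2 τ hτ.1
  have hmean := hT.norm_image_sub_le_of_norm_hasDerivWithin_le hderiv hbound
    (x := p) (y := p + a) ⟨hp, hb⟩ ⟨ha, hab⟩
  calc ‖f (p + a + b) - f (p + a) - f (p + b) + f p‖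
      = ‖f (p + a + b) - f (p + a) - (f (p + b) - f p)‖ := by congr 1; abel
    _ ≤ L * |b| * ‖p + a - p‖ := hmean
    _ = L * |a| * |b| := by rw [add_sub_cancel_left, Real.norm_eq_abs]; ring

theorem norm_secondDifference_le (hS : Convex ℝ S) (hf : ∀ x ∈ S, HasDerivWithinAt f (f' x) S x)
    (hL : ∀ x ∈ S, ∀ y ∈ S, ‖f' x - f' y‖ ≤ L * |x - y|) {p d : ℝ} (hp : p ∈ S)
    (hsub : p - d ∈ S) (hadd : p + d ∈ S) :
    ‖f (p + d) + f (p - d) - (2 : ℝ) • f p‖ ≤ L * d ^ 2 := by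
  have h := norm_mixedDifference_le hS hf hL (p := p - d) (a := d) (b := d) hsub
    (by simpa using hp) (by simpa using hp) (by simpa using hadd)
  rw [sub_add_cancel, mul_assoc, abs_mul_abs_self, ← sq] at h
  convert h using 2
  rw [two_smul]
  abel

theorem norm_fourPointDifference_le {X p q d : ℝ} (hf : ∀ x, HasDerivAt f (f' x) x)
    (hL : ∀ x ∈ Icc (-(2 * X)) (2 * X), ∀ y ∈ Icc (-(2 * X)) (2 * X),
      ‖f' x - f' y‖ ≤ L * |x - y|)
    (hf0 : f 0 = 0) (hp : |p| ≤ X) (hq : |q| ≤ X) (hd : |d| ≤ X) :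
    ‖f (p + d) + f (p - d) + f (q + d) + f (q - d) - (2 : ℝ) • f (p + q)‖
      ≤ 2 * L * (d ^ 2 + |p| * |q|) := by
  have hX : |(0 : ℝ)| ≤ X := by simpa using (abs_nonneg p).trans hp
  have hmem : ∀ {x y : ℝ}, |x| ≤ X → |y| ≤ X → x + y ∈ Icc (-(2 * X)) (2 * X) := fun hx hy =>
    abs_le.1 ((abs_add_le _ _).trans (by linarith))
  have hmem' : ∀ {x : ℝ}, |x| ≤ X → x ∈ Icc (-(2 * X)) (2 * X) := fun hx => by
    simpa using hmem hx hX
  have hconv : Convex ℝ (Icc (-(2 * X)) (2 * X)) := convex_Icc _ _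
  have hderiv := fun x (_ : x ∈ Icc (-(2 * X)) (2 * X)) =>
    (hf x).hasDerivWithinAt (s := Icc (-(2 * X)) (2 * X))
  have second : ∀ {x : ℝ}, |x| ≤ X → ‖f (x + d) + f (x - d) - (2 : ℝ) • f x‖ ≤ L * d ^ 2 :=
    fun hx => norm_secondDifference_le hconv hderiv hL (hmem' hx)
      (by simpa only [sub_eq_add_neg] using hmem hx (by rwa [abs_neg])) (hmem hx hd)
  have mixed : ‖f (p + q) - f p - f q‖ ≤ L * |p| * |q| := by
    simpa only [zero_add, hf0, add_zero] using
      norm_mixedDifference_le hconv hderiv hL (p := 0) (a := p) (b := q) (hmem' hX)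
        (hmem hX hp) (hmem hX hq) (by simpa using hmem hp hq)
  calc _ = ‖(f (p + d) + f (p - d) - (2 : ℝ) • f p) + (f (q + d) + f (q - d) - (2 : ℝ) • f q)
          - (2 : ℝ) • (f (p + q) - f p - f q)‖ := by congr 1; module
    _ ≤ L * d ^ 2 + L * d ^ 2 + 2 * (L * |p| * |q|) := by
        refine (norm_sub_le _ _).trans (add_le_add ((norm_add_le _ _).trans
          (add_le_add (second hp) (second hq))) ?_)
        rw [norm_smul, Real.norm_ofNat]
        exact mul_le_mul_of_nonneg_left mixed zero_le_two
    _ = 2 * L * (d ^ 2 + |p| * |q|) := by ring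

end MixedDifference

section ExpRemainder

/-- The second order Taylor remainder of `x ↦ exp (-i x)` at the origin. -/
def expRemainder (x : ℝ) : ℂ :=
  Complex.exp (-(Complex.I * x)) - 1 + Complex.I * x + (x : ℂ) ^ 2 / 2

/-- The derivative of `expRemainder`. -/
def expRemainderDeriv (x : ℝ) : ℂ :=
  -Complex.I * Complex.exp (-(Complex.I * x)) + Complex.I + x

theorem expRemainder_zero : expRemainder 0 = 0 := by simp [expRemainder]

theorem norm_exp_neg_I_mul_ofReal (x : ℝ) : ‖Complex.exp (-(Complex.I * x))‖ = 1 := by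
  simpa using Complex.norm_exp_I_mul_ofReal (-x)

theorem norm_one_sub_exp_neg_I_mul_ofReal_le (x : ℝ) :
    ‖1 - Complex.exp (-(Complex.I * x))‖ ≤ min 2 |x| := by
  rw [norm_sub_rev]
  refine le_min ((norm_sub_le _ _).trans ?_) ?_
  · rw [norm_exp_neg_I_mul_ofReal, norm_one]
    norm_num
  · simpa using Real.norm_exp_I_mul_ofReal_sub_one_le (x := -x)

theorem hasDerivAt_exp_neg_I_mul_ofReal (x : ℝ) :
    HasDerivAt (fun x : ℝ => Complex.exp (-(Complex.I * x)))
      (-Complex.I * Complex.exp (-(Complex.I * x))) x := by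
  have h : HasDerivAt (fun z : ℂ => Complex.exp (-(Complex.I * z)))
      (Complex.exp (-(Complex.I * x)) * (-(Complex.I * 1))) (x : ℂ) :=
    ((hasDerivAt_id (x : ℂ)).const_mul Complex.I).neg.cexp
  exact h.comp_ofReal.congr_deriv (by ring)

theorem hasDerivAt_expRemainder (x : ℝ) :
    HasDerivAt expRemainder (expRemainderDeriv x) x := by
  have hid : HasDerivAt (fun x : ℝ => (x : ℂ)) 1 x := Complex.ofRealCLM.hasDerivAt
  refine HasDerivAt.congr_deriv (f := expRemainder)
    ((((hasDerivAt_exp_neg_I_mul_ofReal x).sub_const 1).add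
      (hid.const_mul Complex.I)).add ((hid.pow 2).div_const 2)) ?_
  rw [expRemainderDeriv]
  push_cast
  ring

theorem hasDerivAt_expRemainderDeriv (x : ℝ) :
    HasDerivAt expRemainderDeriv (1 - Complex.exp (-(Complex.I * x))) x := by
  have hid : HasDerivAt (fun x : ℝ => (x : ℂ)) 1 x := Complex.ofRealCLM.hasDerivAt
  refine HasDerivAt.congr_deriv (f := expRemainderDeriv)
    ((((hasDerivAt_exp_neg_I_mul_ofReal x).const_mul (-Complex.I)).add_const Complex.I).add hid) ?_
  linear_combination Complex.exp (-(Complex.I * x)) * Complex.I_mul_I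

theorem norm_expRemainderDeriv_sub_le {Y x y : ℝ} (hx : x ∈ Icc (-Y) Y) (hy : y ∈ Icc (-Y) Y) :
    ‖expRemainderDeriv x - expRemainderDeriv y‖ ≤ min 2 Y * |x - y| :=
  (convex_Icc (-Y) Y).norm_image_sub_le_of_norm_hasDerivWithin_le
    (fun z _ => (hasDerivAt_expRemainderDeriv z).hasDerivWithinAt)
    (fun z hz => (norm_one_sub_exp_neg_I_mul_ofReal_le z).trans
      (min_le_min le_rfl (abs_le.2 hz))) hy hx

theorem norm_expRemainder_le (x : ℝ) : ‖expRemainder x‖ ≤ min 2 |x| * x ^ 2 := by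
  have hmem : ∀ z ∈ Icc (-|x|) |x|, ‖expRemainderDeriv z‖ ≤ min 2 |x| * |x| := fun z hz => by
    have h := norm_expRemainderDeriv_sub_le hz (y := 0) (by simp)
    simp only [expRemainderDeriv, Complex.ofReal_zero, mul_zero, neg_zero, Complex.exp_zero,
      mul_one, neg_add_cancel, add_zero, sub_zero] at h
    exact h.trans (mul_le_mul_of_nonneg_left (abs_le.2 hz) (by positivity))
  have h := (convex_Icc (-|x|) |x|).norm_image_sub_le_of_norm_hasDerivWithin_le
    (fun z _ => (hasDerivAt_expRemainder z).hasDerivWithinAt) hmem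
    (x := 0) (y := x) (by simp) (abs_le.1 le_rfl)
  rwa [expRemainder_zero, sub_zero, sub_zero, Real.norm_eq_abs, mul_assoc, abs_mul_abs_self,
    ← sq] at h

theorem norm_expRemainder_fourPoint_le {X x c d : ℝ} (hx : |x| ≤ X) (hc : |c| ≤ 1)
    (hd : d ^ 2 ≤ X ^ 2 * (1 - c ^ 2) / 4) :
    ‖expRemainder ((1 + c) / 2 * x + d) + expRemainder ((1 + c) / 2 * x - d)
        + expRemainder ((1 - c) / 2 * x + d) + expRemainder ((1 - c) / 2 * x - d)
        - 2 * expRemainder x‖ ≤ 2 * min 1 X * (1 - c ^ 2) * X ^ 2 := by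
  have hX : 0 ≤ X := (abs_nonneg x).trans hx
  obtain ⟨hc₁, hc₂⟩ := abs_le.1 hc
  have hx2 : x ^ 2 ≤ X ^ 2 := sq_le_sq' (abs_le.1 hx).1 (abs_le.1 hx).2
  have hdX : |d| ≤ X := abs_le_of_sq_le_sq (by nlinarith [sq_nonneg c, sq_nonneg X]) hX
  have hscale : ∀ k : ℝ, 0 ≤ k → k ≤ 1 → |k * x| ≤ X := fun k hk₀ hk₁ => by
    rw [abs_mul, abs_of_nonneg hk₀]
    exact (mul_le_of_le_one_left (abs_nonneg x) hk₁).trans hx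
  have hprod : |(1 + c) / 2 * x| * |(1 - c) / 2 * x| = (1 - c ^ 2) / 4 * x ^ 2 := by
    rw [abs_mul, abs_mul, abs_of_nonneg (by linarith : 0 ≤ (1 + c) / 2),
      abs_of_nonneg (by linarith : 0 ≤ (1 - c) / 2), ← sq_abs x]
    ring
  have h := norm_fourPointDifference_le hasDerivAt_expRemainder
    (fun y hy z hz => norm_expRemainderDeriv_sub_le hy hz) expRemainder_zero
    (hscale ((1 + c) / 2) (by linarith) (by linarith))
    (hscale ((1 - c) / 2) (by linarith) (by linarith)) hdX
  rw [hprod, show (1 + c) / 2 * x + (1 - c) / 2 * x = x by ring, Complex.real_smul,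
    show min 2 (2 * X) = 2 * min 1 X by rw [mul_min_of_nonneg _ _ zero_le_two, mul_one]] at h
  have hc0 : 0 ≤ 1 - c ^ 2 := by nlinarith
  calc _ ≤ 2 * (2 * min 1 X) * (d ^ 2 + (1 - c ^ 2) / 4 * x ^ 2) := by exact_mod_cast h
    _ ≤ 2 * (2 * min 1 X) * (X ^ 2 * (1 - c ^ 2) / 4 + (1 - c ^ 2) / 4 * X ^ 2) := by gcongr
    _ = 2 * min 1 X * (1 - c ^ 2) * X ^ 2 := by ring

end ExpRemainder

section Energy

variable {V : Type*} [NormedAddCommGroup V]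

theorem norm_sq_mul_min_one_nonneg (v : V) {r : ℝ} (hr : 0 ≤ r) :
    0 ≤ ‖v‖ ^ 2 * min 1 (r * ‖v‖) := by positivity

theorem norm_sq_mul_min_one_le (v : V) (r : ℝ) : ‖v‖ ^ 2 * min 1 (r * ‖v‖) ≤ ‖v‖ ^ 2 :=
  mul_le_of_le_one_right (sq_nonneg _) (min_le_left _ _)

variable [MeasurableSpace V] {F : Measure V}

/-- The energy `∫ |v|² dF`, with junk value `0` when it is infinite. -/
def energy (F : Measure V) : ℝ := ∫ v, ‖v‖ ^ 2 ∂F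

/-- The part of the energy seen as a third moment at scale `r`; for finite energy it tends to `0`
with `r` and measures the error in second order expansions of the characteristic function. -/
def energyModulus (F : Measure V) (r : ℝ) : ℝ := ∫ v, ‖v‖ ^ 2 * min 1 (r * ‖v‖) ∂F

theorem lintegral_norm_sq_eq_ofReal_energy (h : Integrable (fun v => ‖v‖ ^ 2) F) :
    ∫⁻ v, ENNReal.ofReal (‖v‖ ^ 2) ∂F = ENNReal.ofReal (energy F) :=
  (ofReal_integral_eq_lintegral_ofReal h (ae_of_all _ fun _ => sq_nonneg _)).symm

variable [BorelSpace V] [SecondCountableTopology V]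

theorem integrable_norm_sq_mul_min_one (h : Integrable (fun v => ‖v‖ ^ 2) F) {r : ℝ}
    (hr : 0 ≤ r) : Integrable (fun v => ‖v‖ ^ 2 * min 1 (r * ‖v‖)) F := by
  refine h.mono' (by fun_prop) (ae_of_all _ fun v => ?_)
  rw [Real.norm_of_nonneg (norm_sq_mul_min_one_nonneg v hr)]
  exact norm_sq_mul_min_one_le v r

theorem energyModulus_le_energy (h : Integrable (fun v => ‖v‖ ^ 2) F) {r : ℝ} (hr : 0 ≤ r) :
    energyModulus F r ≤ energy F :=
  integral_mono (integrable_norm_sq_mul_min_one h hr) h fun v => norm_sq_mul_min_one_le v r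

theorem tendsto_energyModulus (h : Integrable (fun v => ‖v‖ ^ 2) F) :
    Tendsto (energyModulus F) (𝓝[≥] 0) (𝓝 0) := by
  have hlim : Tendsto (energyModulus F) (𝓝[≥] 0) (𝓝 (∫ _, (0 : ℝ) ∂F)) := by
    refine tendsto_integral_filter_of_dominated_convergence (fun v => ‖v‖ ^ 2)
      (.of_forall fun r => by fun_prop) ?_ h (ae_of_all _ fun v => ?_)
    · filter_upwards [self_mem_nhdsWithin] with r hr
      refine ae_of_all _ fun v => ?_
      rw [Real.norm_of_nonneg (norm_sq_mul_min_one_nonneg v hr)]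
      exact norm_sq_mul_min_one_le v r
    · have hcont : ContinuousAt (fun r : ℝ => ‖v‖ ^ 2 * min 1 (r * ‖v‖)) 0 := by fun_prop
      simpa using hcont.tendsto.mono_left nhdsWithin_le_nhds
  simpa using hlim

end Energy

section SecondMoment

theorem inner_sq_le_norm_sq_mul_norm_sq {V : Type*} [NormedAddCommGroup V] [InnerProductSpace ℝ V]
    (v w : V) : ⟪v, w⟫ ^ 2 ≤ ‖v‖ ^ 2 * ‖w‖ ^ 2 := by
  rw [← mul_pow, ← sq_abs]
  exact pow_le_pow_left₀ (abs_nonneg _) (abs_real_inner_le_norm v w) 2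

variable {V : Type*} [NormedAddCommGroup V] [InnerProductSpace ℝ V] [MeasurableSpace V]
  {F : Measure V}

/-- The quadratic form `ξ ↦ ∫ ⟨v, ξ⟩² dF` of second moments. -/
def secondMoment (F : Measure V) (ξ : V) : ℝ := ∫ v, ⟪v, ξ⟫ ^ 2 ∂F

theorem secondMoment_smul (F : Measure V) (r : ℝ) (ξ : V) :
    secondMoment F (r • ξ) = r ^ 2 * secondMoment F ξ := by
  simp only [secondMoment, inner_smul_right, mul_pow, integral_const_mul]

theorem secondMoment_nonneg (F : Measure V) (ξ : V) : 0 ≤ secondMoment F ξ :=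
  integral_nonneg fun _ => sq_nonneg _

variable [BorelSpace V] [SecondCountableTopology V]

theorem integrable_inner_sq (h : Integrable (fun v => ‖v‖ ^ 2) F) (ξ : V) :
    Integrable (fun v => ⟪v, ξ⟫ ^ 2) F := by
  refine (h.mul_const (‖ξ‖ ^ 2)).mono' (by fun_prop) (ae_of_all _ fun v => ?_)
  rw [Real.norm_of_nonneg (sq_nonneg _)]
  exact inner_sq_le_norm_sq_mul_norm_sq v ξ

theorem integrable_inner [IsFiniteMeasure F] (h : Integrable (fun v => ‖v‖ ^ 2) F) (ξ : V) :
    Integrable (fun v => ⟪v, ξ⟫) F := by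
  have hnorm : MemLp (fun v : V => v) 2 F :=
    (memLp_two_iff_integrable_sq_norm (by fun_prop)).2 h
  exact (hnorm.integrable (by norm_num)).inner_const ξ

theorem secondMoment_le (h : Integrable (fun v => ‖v‖ ^ 2) F) (ξ : V) :
    secondMoment F ξ ≤ energy F * ‖ξ‖ ^ 2 := by
  rw [energy, ← integral_mul_const]
  exact integral_mono (integrable_inner_sq h ξ) (h.mul_const _)
    fun v => inner_sq_le_norm_sq_mul_norm_sq v ξ

theorem energy_eq_sum_secondMoment {ι : Type*} [Fintype ι] (e : OrthonormalBasis ι ℝ V)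
    (h : Integrable (fun v => ‖v‖ ^ 2) F) : energy F = ∑ i, secondMoment F (e i) := by
  simp only [energy, secondMoment, ← e.sum_sq_inner_left]
  exact integral_finsetSum _ fun i _ => integrable_inner_sq h (e i)

end SecondMoment

section CharFn

variable {F : Measure E3}

theorem charFn_eq_charFun (F : Measure E3) (ξ : E3) : charFn F ξ = charFun F (-ξ) := by
  simp only [charFn, charFun, inner_neg_right, Complex.ofReal_neg, neg_mul, mul_comm Complex.I]

theorem charFn_zero [IsProbabilityMeasure F] : charFn F 0 = 1 := by simp [charFn]

theorem continuous_charFn [IsFiniteMeasure F] : Continuous (charFn F) := by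
  rw [funext (charFn_eq_charFun F)]
  exact continuous_charFun.comp continuous_neg

theorem integrable_exp_neg_I_mul_inner [IsFiniteMeasure F] (ξ : E3) :
    Integrable (fun v => Complex.exp (-(Complex.I * (⟪v, ξ⟫ : ℂ)))) F :=
  .of_bound (by fun_prop) 1 (ae_of_all _ fun v => (norm_exp_neg_I_mul_ofReal _).le)

/-- The second order Taylor remainder of `charFn F` at the origin. -/
def charFnRemainder (F : Measure E3) (ξ : E3) : ℂ := ∫ v, expRemainder ⟪v, ξ⟫ ∂F

theorem integrable_expRemainder_inner (h : Integrable (fun v => ‖v‖ ^ 2) F) (ξ : E3) :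
    Integrable (fun v => expRemainder ⟪v, ξ⟫) F := by
  refine ((integrable_inner_sq h ξ).const_mul 2).mono'
    (Continuous.aestronglyMeasurable (by unfold expRemainder; fun_prop)) (ae_of_all _ fun v => ?_)
  exact (norm_expRemainder_le _).trans
    (mul_le_mul_of_nonneg_right (min_le_left _ _) (sq_nonneg _))

theorem charFn_eq_add_charFnRemainder [IsProbabilityMeasure F]
    (h : Integrable (fun v => ‖v‖ ^ 2) F) (ξ : E3) :
    charFn F ξ = 1 - Complex.I * ↑(∫ v, ⟪v, ξ⟫ ∂F) - ↑(secondMoment F ξ) / 2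
      + charFnRemainder F ξ := by
  have hlin : Integrable (fun v => Complex.I * ((⟪v, ξ⟫ : ℝ) : ℂ)) F :=
    (integrable_inner h ξ).ofReal.const_mul _
  have hquad : Integrable (fun v => ((⟪v, ξ⟫ ^ 2 : ℝ) : ℂ) / 2) F :=
    (integrable_inner_sq h ξ).ofReal.div_const 2
  have hexp : ∀ x : ℝ, Complex.exp (-(Complex.I * x))
      = (1 - Complex.I * x - ((x ^ 2 : ℝ) : ℂ) / 2) + expRemainder x := fun x => by
    rw [expRemainder]
    push_cast
    ring
  have hone : Integrable (fun _ => (1 : ℂ)) F := integrable_const 1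
  have haffine : Integrable (fun v => 1 - Complex.I * ((⟪v, ξ⟫ : ℝ) : ℂ)) F := hone.sub hlin
  have hpoly : Integrable
      (fun v => 1 - Complex.I * ((⟪v, ξ⟫ : ℝ) : ℂ) - ((⟪v, ξ⟫ ^ 2 : ℝ) : ℂ) / 2) F :=
    haffine.sub hquad
  simp only [charFn, hexp]
  rw [integral_add hpoly (integrable_expRemainder_inner h ξ),
    integral_sub haffine hquad, integral_sub hone hlin,
    integral_const_mul, integral_div, integral_complex_ofReal, integral_complex_ofReal]
  simp [charFnRemainder, secondMoment]

theorem norm_charFnRemainder_le (h : Integrable (fun v => ‖v‖ ^ 2) F) (ξ : E3) :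
    ‖charFnRemainder F ξ‖ ≤ 2 * ‖ξ‖ ^ 2 * energyModulus F ‖ξ‖ := by
  rw [energyModulus, ← integral_const_mul]
  refine norm_integral_le_of_norm_le
    ((integrable_norm_sq_mul_min_one h (norm_nonneg ξ)).const_mul _) (ae_of_all _ fun v => ?_)
  have hinner : |⟪v, ξ⟫| ≤ ‖ξ‖ * ‖v‖ := (abs_real_inner_le_norm v ξ).trans_eq (mul_comm _ _)
  calc ‖expRemainder ⟪v, ξ⟫‖
      ≤ min 2 |⟪v, ξ⟫| * ⟪v, ξ⟫ ^ 2 := norm_expRemainder_le _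
    _ ≤ min 2 (2 * (‖ξ‖ * ‖v‖)) * (‖v‖ ^ 2 * ‖ξ‖ ^ 2) := by
        gcongr
        · linarith [abs_nonneg ⟪v, ξ⟫]
        · exact inner_sq_le_norm_sq_mul_norm_sq v ξ
    _ = 2 * ‖ξ‖ ^ 2 * (‖v‖ ^ 2 * min 1 (‖ξ‖ * ‖v‖)) := by
        rw [show min 2 (2 * (‖ξ‖ * ‖v‖)) = 2 * min 1 (‖ξ‖ * ‖v‖) by
          rw [mul_min_of_nonneg _ _ zero_le_two, mul_one]]
        ring

end CharFn

section QuadraticBound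

/-- `φ - 1` is `O(|ξ|²)` with constant `C`, that is, `‖φ - 1‖₂ ≤ C`. -/
def QuadraticBound (C : ℝ) (φ : E3 → ℂ) : Prop := ∀ ξ, ‖φ ξ - 1‖ ≤ C * ‖ξ‖ ^ 2

variable {F : Measure E3} {C : ℝ}

theorem QuadraticBound.nonneg {φ : E3 → ℂ} (h : QuadraticBound C φ) : 0 ≤ C := by
  obtain ⟨e, he⟩ := exists_norm_eq E3 zero_le_one
  simpa [he] using (norm_nonneg _).trans (h e)

theorem KBdd.exists_quadraticBound {φ : E3 → ℂ} (h : KBdd 2 φ) (h0 : φ 0 = 1) :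
    ∃ C, QuadraticBound C φ := by
  obtain ⟨C, hC⟩ := h
  refine ⟨C, fun ξ => ?_⟩
  obtain rfl | hξ := eq_or_ne ξ 0
  · simp [h0]
  · simpa only [Real.rpow_two] using hC ξ hξ

theorem lintegral_one_sub_cos_inner [IsProbabilityMeasure F] (ξ : E3) :
    ∫⁻ v, ENNReal.ofReal (1 - Real.cos ⟪v, ξ⟫) ∂F = ENNReal.ofReal (1 - (charFn F ξ).re) := by
  have hcos : Integrable (fun v : E3 => Real.cos ⟪v, ξ⟫) F :=
    .of_bound (by fun_prop) 1 (ae_of_all _ fun v => Real.abs_cos_le_one _)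
  have hre : (charFn F ξ).re = ∫ v, Real.cos ⟪v, ξ⟫ ∂F := by
    rw [charFn, ← RCLike.re_eq_complex_re, ← integral_re (integrable_exp_neg_I_mul_inner ξ)]
    simp [Complex.exp_re]
  have hdiff : Integrable (fun v : E3 => 1 - Real.cos ⟪v, ξ⟫) F := (integrable_const 1).sub hcos
  rw [← ofReal_integral_eq_lintegral_ofReal hdiff
      (ae_of_all _ fun v => sub_nonneg.2 (Real.cos_le_one _)),
    integral_sub (integrable_const 1) hcos, hre]
  simp

theorem tendsto_two_mul_one_sub_cos_div_sq (x : ℝ) :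
    Tendsto (fun r : ℝ => 2 / r ^ 2 * (1 - Real.cos (r * x))) (𝓝[≠] 0) (𝓝 (x ^ 2)) := by
  have hderiv : HasDerivAt (fun r : ℝ => 2 * Real.sin (r * (x / 2))) x 0 := by
    have h := (((hasDerivAt_id (0 : ℝ)).mul_const (x / 2)).sin).const_mul 2
    exact h.congr_deriv (by simp only [id_eq, zero_mul, Real.cos_zero]; ring)
  refine (hderiv.tendsto_slope_zero.pow 2).congr fun r => ?_
  have hcos : Real.cos (r * x) = 1 - 2 * Real.sin (r * (x / 2)) ^ 2 := by
    rw [show r * x = 2 * (r * (x / 2)) by ring, Real.cos_two_mul, Real.cos_sq']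
    ring
  rw [hcos]
  simp only [zero_add, zero_mul, Real.sin_zero, mul_zero, sub_zero, smul_eq_mul]
  ring

theorem QuadraticBound.lintegral_inner_sq_le [IsProbabilityMeasure F]
    (h : QuadraticBound C (charFn F)) (ξ : E3) :
    ∫⁻ v, ENNReal.ofReal (⟪v, ξ⟫ ^ 2) ∂F ≤ ENNReal.ofReal (2 * C * ‖ξ‖ ^ 2) := by
  let f : ℝ → E3 → ENNReal := fun r v => ENNReal.ofReal (2 / r ^ 2 * (1 - Real.cos (r * ⟪v, ξ⟫)))
  have hlim : ∀ v, liminf (fun r => f r v) (𝓝[≠] 0) = ENNReal.ofReal (⟪v, ξ⟫ ^ 2) := fun v =>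
    (ENNReal.tendsto_ofReal (tendsto_two_mul_one_sub_cos_div_sq ⟪v, ξ⟫)).liminf_eq
  have hbound : ∀ r ≠ 0, ∫⁻ v, f r v ∂F ≤ ENNReal.ofReal (2 * C * ‖ξ‖ ^ 2) := by
    intro r hr
    have hre : 1 - (charFn F (r • ξ)).re ≤ C * (r ^ 2 * ‖ξ‖ ^ 2) := by
      have hnorm := (Complex.abs_re_le_norm _).trans (h (r • ξ))
      rw [norm_smul, mul_pow, Real.norm_eq_abs, sq_abs] at hnorm
      rw [Complex.sub_re, Complex.one_re] at hnorm
      linarith [(abs_le.1 hnorm).1]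
    simp only [f, ENNReal.ofReal_mul (by positivity : 0 ≤ 2 / r ^ 2), ← inner_smul_right]
    rw [lintegral_const_mul _ (by fun_prop), lintegral_one_sub_cos_inner,
      ← ENNReal.ofReal_mul (by positivity)]
    refine ENNReal.ofReal_le_ofReal ((mul_le_mul_of_nonneg_left hre (by positivity)).trans_eq ?_)
    field_simp
  calc ∫⁻ v, ENNReal.ofReal (⟪v, ξ⟫ ^ 2) ∂F
      = ∫⁻ v, liminf (fun r => f r v) (𝓝[≠] 0) ∂F := by simp only [hlim]
    _ ≤ liminf (fun r => ∫⁻ v, f r v ∂F) (𝓝[≠] 0) := lintegral_liminf_le fun r => by fun_prop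
    _ ≤ ENNReal.ofReal (2 * C * ‖ξ‖ ^ 2) :=
        liminf_le_of_frequently_le' <| Eventually.frequently <| by
          filter_upwards [self_mem_nhdsWithin] with r hr using hbound r hr

theorem QuadraticBound.lintegral_norm_sq_le [IsProbabilityMeasure F]
    (h : QuadraticBound C (charFn F)) :
    ∫⁻ v, ENNReal.ofReal (‖v‖ ^ 2) ∂F ≤ ENNReal.ofReal (6 * C) := by
  let e := EuclideanSpace.basisFun (Fin 3) ℝ
  calc ∫⁻ v, ENNReal.ofReal (‖v‖ ^ 2) ∂F
      = ∑ i, ∫⁻ v, ENNReal.ofReal (⟪v, e i⟫ ^ 2) ∂F := by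
        rw [← lintegral_finsetSum _ fun _ _ => by fun_prop]
        simp only [← ENNReal.ofReal_sum_of_nonneg fun _ _ => sq_nonneg _, e.sum_sq_inner_left]
    _ ≤ ∑ i, ENNReal.ofReal (2 * C * ‖e i‖ ^ 2) :=
        Finset.sum_le_sum fun i _ => h.lintegral_inner_sq_le (e i)
    _ = ENNReal.ofReal (6 * C) := by
        have hC := h.nonneg
        rw [← ENNReal.ofReal_sum_of_nonneg fun i _ => by positivity]
        simp [e.norm_eq_one]
        ring_nf

theorem QuadraticBound.integrable_norm_sq [IsProbabilityMeasure F]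
    (h : QuadraticBound C (charFn F)) : Integrable (fun v => ‖v‖ ^ 2) F :=
  ⟨by fun_prop, (hasFiniteIntegral_iff_ofReal (ae_of_all _ fun _ => sq_nonneg _)).2
    (h.lintegral_norm_sq_le.trans_lt ENNReal.ofReal_lt_top)⟩

theorem QuadraticBound.energy_le [IsProbabilityMeasure F] (h : QuadraticBound C (charFn F)) :
    energy F ≤ 6 * C := by
  rw [← ENNReal.ofReal_le_ofReal_iff (by linarith [h.nonneg]),
    ← lintegral_norm_sq_eq_ofReal_energy h.integrable_norm_sq]
  exact h.lintegral_norm_sq_le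

theorem QuadraticBound.integral_inner_eq_zero [IsProbabilityMeasure F]
    (h : QuadraticBound C (charFn F)) (ξ : E3) : ∫ v, ⟪v, ξ⟫ ∂F = 0 := by
  have hint := h.integrable_norm_sq
  set m : E3 → ℝ := fun η => ∫ v, ⟪v, η⟫ ∂F with hm
  have hquad : ∀ η, |m η| ≤ (C + 5 / 2 * energy F) * ‖η‖ ^ 2 := fun η => by
    have hnorm : |m η| = ‖charFnRemainder F η - ↑(secondMoment F η) / 2 - (charFn F η - 1)‖ := by
      rw [charFn_eq_add_charFnRemainder hint η, ← Real.norm_eq_abs, ← Complex.norm_real,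
        ← one_mul ‖(m η : ℂ)‖, ← Complex.norm_I, ← norm_mul]
      congr 1
      ring
    have hsecond : ‖(secondMoment F η : ℂ) / 2‖ ≤ energy F * ‖η‖ ^ 2 / 2 := by
      rw [norm_div, Complex.norm_real, Real.norm_of_nonneg (secondMoment_nonneg F η),
        Complex.norm_ofNat]
      gcongr
      exact secondMoment_le hint η
    have hrem : ‖charFnRemainder F η‖ ≤ 2 * ‖η‖ ^ 2 * energy F :=
      (norm_charFnRemainder_le hint η).trans (mul_le_mul_of_nonneg_left
        (energyModulus_le_energy hint (norm_nonneg η)) (by positivity))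
    have htri := norm_sub_le (charFnRemainder F η - ↑(secondMoment F η) / 2) (charFn F η - 1)
    have htri' := norm_sub_le (charFnRemainder F η) (↑(secondMoment F η) / 2)
    rw [hnorm]
    linarith [h η]
  have hsmall : ∀ r > 0, |m ξ| ≤ r * ((C + 5 / 2 * energy F) * ‖ξ‖ ^ 2) := fun r hr => by
    have hr' := hquad (r • ξ)
    simp only [hm, inner_smul_right, integral_const_mul, norm_smul, abs_mul, mul_pow,
      Real.norm_eq_abs, abs_of_pos hr] at hr'
    refine le_of_mul_le_mul_left (hr'.trans_eq ?_) hr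
    ring
  have hlim : Tendsto (fun r : ℝ => r * ((C + 5 / 2 * energy F) * ‖ξ‖ ^ 2)) (𝓝[>] 0) (𝓝 0) := by
    have hcont : Continuous fun r : ℝ => r * ((C + 5 / 2 * energy F) * ‖ξ‖ ^ 2) := by fun_prop
    simpa using (hcont.tendsto 0).mono_left nhdsWithin_le_nhds
  exact abs_nonpos_iff.1 (ge_of_tendsto hlim (eventually_mem_nhdsWithin.mono hsmall))

end QuadraticBound

section CollisionDefect

/-- The collision difference `φ(ξ⁺) φ(ξ⁻) - φ(ξ)`, for a direction `σ` taken in the ambient space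
so that `σ` can be averaged with linear maps and pushed-forward measures. -/
def collisionDefect (φ : E3 → ℂ) (ξ σ : E3) : ℂ :=
  φ ((1 / 2 : ℝ) • ξ + (‖ξ‖ / 2) • σ) * φ ((1 / 2 : ℝ) • ξ - (‖ξ‖ / 2) • σ) - φ ξ

variable {φ : E3 → ℂ} {F : Measure E3} {C r : ℝ} {e σ : E3}

theorem collisionDefect_smul (φ : E3 → ℂ) (hr : 0 ≤ r) (he : ‖e‖ = 1) (σ : E3) :
    collisionDefect φ (r • e) σ =
      φ ((r / 2) • (e + σ)) * φ ((r / 2) • (e - σ)) - φ (r • e) := by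
  have hnorm : ‖r • e‖ = r := by rw [norm_smul, he, mul_one, Real.norm_of_nonneg hr]
  rw [collisionDefect, hnorm]
  congr 3 <;> module

theorem norm_half_smul_add_sq (he : ‖e‖ = 1) (hσ : ‖σ‖ = 1) :
    ‖(r / 2) • (e + σ)‖ ^ 2 = r ^ 2 * ((1 + ⟪e, σ⟫) / 2) := by
  rw [norm_smul, mul_pow, norm_add_sq_real, he, hσ, Real.norm_eq_abs, sq_abs]
  ring

theorem norm_half_smul_sub_sq (he : ‖e‖ = 1) (hσ : ‖σ‖ = 1) :
    ‖(r / 2) • (e - σ)‖ ^ 2 = r ^ 2 * ((1 - ⟪e, σ⟫) / 2) := by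
  simpa [sub_eq_add_neg] using norm_half_smul_add_sq (r := r) he ((norm_neg σ).trans hσ)

theorem abs_inner_le_one (he : ‖e‖ = 1) (hσ : ‖σ‖ = 1) : |⟪e, σ⟫| ≤ 1 := by
  simpa [he, hσ] using abs_real_inner_le_norm e σ

theorem one_sub_inner_sq_nonneg (he : ‖e‖ = 1) (hσ : ‖σ‖ = 1) : 0 ≤ 1 - ⟪e, σ⟫ ^ 2 :=
  sub_nonneg.2 ((sq_le_one_iff_abs_le_one _).2 (abs_inner_le_one he hσ))

theorem QuadraticBound.norm_sub_one_mul_sub_one_le (h : QuadraticBound C φ) (he : ‖e‖ = 1)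
    (hσ : ‖σ‖ = 1) :
    ‖(φ ((r / 2) • (e + σ)) - 1) * (φ ((r / 2) • (e - σ)) - 1)‖
      ≤ C ^ 2 * r ^ 4 * (1 - ⟪e, σ⟫ ^ 2) / 4 := by
  have hadd := h ((r / 2) • (e + σ))
  have hsub := h ((r / 2) • (e - σ))
  rw [norm_half_smul_add_sq he hσ] at hadd
  rw [norm_half_smul_sub_sq he hσ] at hsub
  rw [norm_mul]
  refine (mul_le_mul hadd hsub (norm_nonneg _) ((norm_nonneg _).trans hadd)).trans_eq ?_
  ring

theorem secondMoment_add_add_secondMoment_sub (h : Integrable (fun v => ‖v‖ ^ 2) F) (ξ η : E3) :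
    secondMoment F (ξ + η) + secondMoment F (ξ - η)
      = 2 * (secondMoment F ξ + secondMoment F η) := by
  simp only [secondMoment]
  rw [← integral_add (integrable_inner_sq h _) (integrable_inner_sq h _),
    ← integral_add (integrable_inner_sq h _) (integrable_inner_sq h _), ← integral_const_mul]
  congr with v
  rw [inner_add_right, inner_sub_right]
  ring

theorem QuadraticBound.charFn_sub_one_eq [IsProbabilityMeasure F]
    (h : QuadraticBound C (charFn F)) (ξ : E3) :
    charFn F ξ - 1 = charFnRemainder F ξ - ↑(secondMoment F ξ) / 2 := by
  rw [charFn_eq_add_charFnRemainder h.integrable_norm_sq, h.integral_inner_eq_zero]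
  push_cast
  ring

theorem QuadraticBound.collisionDefect_charFn_eq [IsProbabilityMeasure F]
    (h : QuadraticBound C (charFn F)) (hr : 0 ≤ r) (he : ‖e‖ = 1) (σ : E3) :
    collisionDefect (charFn F) (r • e) σ
      = (charFn F ((r / 2) • (e + σ)) - 1) * (charFn F ((r / 2) • (e - σ)) - 1)
        + (charFnRemainder F ((r / 2) • (e + σ)) + charFnRemainder F ((r / 2) • (e - σ))
            - charFnRemainder F (r • e))
        - ((r ^ 2 / 4 * (secondMoment F σ - secondMoment F e) : ℝ) : ℂ) := by
  have hquad : secondMoment F ((r / 2) • (e + σ)) + secondMoment F ((r / 2) • (e - σ))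
      - secondMoment F (r • e) = 2 * (r ^ 2 / 4 * (secondMoment F σ - secondMoment F e)) := by
    have hpar := secondMoment_add_add_secondMoment_sub h.integrable_norm_sq e σ
    simp only [secondMoment_smul]
    linear_combination (r ^ 2 / 4) * hpar
  rw [collisionDefect_smul _ hr he]
  have hquad' := congrArg ((↑) : ℝ → ℂ) hquad
  push_cast at hquad' ⊢
  linear_combination h.charFn_sub_one_eq ((r / 2) • (e + σ))
    + h.charFn_sub_one_eq ((r / 2) • (e - σ)) - h.charFn_sub_one_eq (r • e) - hquad' / 2

theorem inner_sub_inner_mul_inner_sq_le (he : ‖e‖ = 1) (hσ : ‖σ‖ = 1) (v : E3) :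
    (⟪v, σ⟫ - ⟪e, σ⟫ * ⟪v, e⟫) ^ 2 ≤ ‖v‖ ^ 2 * (1 - ⟪e, σ⟫ ^ 2) := by
  have h := inner_sq_le_norm_sq_mul_norm_sq v (σ - ⟪e, σ⟫ • e)
  rw [inner_sub_right, inner_smul_right, norm_sub_sq_real, norm_smul, mul_pow, inner_smul_right,
    real_inner_comm e σ, he, hσ, Real.norm_eq_abs, sq_abs] at h
  linarith

/-- A direction and its half turn `2⟨e, σ⟩e - σ` about `e` are paired because the azimuthal first
order terms cancel, leaving the integrable factor `1 - ⟨e, σ⟩²`. -/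
theorem norm_expRemainder_halfTurn_le (hr : 0 ≤ r) (he : ‖e‖ = 1) (hσ : ‖σ‖ = 1) {σ' : E3}
    (hσ' : σ' = (2 * ⟪e, σ⟫) • e - σ) (v : E3) :
    ‖expRemainder ⟪v, (r / 2) • (e + σ)⟫ + expRemainder ⟪v, (r / 2) • (e - σ)⟫
        + expRemainder ⟪v, (r / 2) • (e + σ')⟫ + expRemainder ⟪v, (r / 2) • (e - σ')⟫
        - 2 * expRemainder ⟪v, r • e⟫‖
      ≤ 2 * r ^ 2 * (1 - ⟪e, σ⟫ ^ 2) * (‖v‖ ^ 2 * min 1 (r * ‖v‖)) := by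
  set c := ⟪e, σ⟫ with hc
  set d := r / 2 * (⟪v, σ⟫ - c * ⟪v, e⟫) with hd
  have hx : |r * ⟪v, e⟫| ≤ r * ‖v‖ := by
    rw [abs_mul, abs_of_nonneg hr]
    exact mul_le_mul_of_nonneg_left (by simpa [he] using abs_real_inner_le_norm v e) hr
  have hd2 : d ^ 2 ≤ (r * ‖v‖) ^ 2 * (1 - c ^ 2) / 4 := by
    rw [hd, mul_pow]
    linarith [mul_le_mul_of_nonneg_left (inner_sub_inner_mul_inner_sq_le he hσ v)
      (sq_nonneg (r / 2))]
  convert norm_expRemainder_fourPoint_le hx (abs_inner_le_one he hσ) hd2 using 1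
  · simp only [hσ', inner_add_right, inner_sub_right, inner_smul_right, ← hc]
    rw [show r / 2 * (⟪v, e⟫ + ⟪v, σ⟫) = (1 + c) / 2 * (r * ⟪v, e⟫) + d by rw [hd]; ring,
      show r / 2 * (⟪v, e⟫ - ⟪v, σ⟫) = (1 - c) / 2 * (r * ⟪v, e⟫) - d by rw [hd]; ring,
      show r / 2 * (⟪v, e⟫ + (2 * c * ⟪v, e⟫ - ⟪v, σ⟫)) = (1 + c) / 2 * (r * ⟪v, e⟫) - d by
        rw [hd]; ring,
      show r / 2 * (⟪v, e⟫ - (2 * c * ⟪v, e⟫ - ⟪v, σ⟫)) = (1 - c) / 2 * (r * ⟪v, e⟫) + d by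
        rw [hd]; ring]
    congr 1
    ring
  · ring

theorem norm_charFnRemainder_halfTurn_le (h : Integrable (fun v => ‖v‖ ^ 2) F) (hr : 0 ≤ r)
    (he : ‖e‖ = 1) (hσ : ‖σ‖ = 1) {σ' : E3} (hσ' : σ' = (2 * ⟪e, σ⟫) • e - σ) :
    ‖(charFnRemainder F ((r / 2) • (e + σ)) + charFnRemainder F ((r / 2) • (e - σ))
          - charFnRemainder F (r • e))
        + (charFnRemainder F ((r / 2) • (e + σ')) + charFnRemainder F ((r / 2) • (e - σ'))
          - charFnRemainder F (r • e))‖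
      ≤ 2 * r ^ 2 * (1 - ⟪e, σ⟫ ^ 2) * energyModulus F r := by
  have hint := integrable_expRemainder_inner h
  calc _ = ‖∫ v, (expRemainder ⟪v, (r / 2) • (e + σ)⟫ + expRemainder ⟪v, (r / 2) • (e - σ)⟫
          + expRemainder ⟪v, (r / 2) • (e + σ')⟫ + expRemainder ⟪v, (r / 2) • (e - σ')⟫
          - 2 * expRemainder ⟪v, r • e⟫) ∂F‖ := by
        rw [integral_sub ((((hint _).fun_add (hint _)).fun_add (hint _)).fun_add (hint _))
            ((hint _).const_mul 2),
          integral_add (((hint _).fun_add (hint _)).fun_add (hint _)) (hint _),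
          integral_add ((hint _).fun_add (hint _)) (hint _), integral_add (hint _) (hint _),
          integral_const_mul]
        simp only [charFnRemainder]
        congr 1
        ring
    _ ≤ _ := by
        rw [energyModulus, ← integral_const_mul]
        exact norm_integral_le_of_norm_le ((integrable_norm_sq_mul_min_one h hr).const_mul _)
          (ae_of_all _ (norm_expRemainder_halfTurn_le hr he hσ hσ'))

end CollisionDefect

section QuarterTurn

/-- `J` is a rotation by a right angle about the axis spanned by the unit vector `e`. Averaging
over its powers replaces averaging over all rotations about `e`: it already removes the first order
terms and makes the second order terms isotropic in the plane orthogonal to `e`. -/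
structure IsQuarterTurn (e : E3) (J : E3 ≃ₗᵢ[ℝ] E3) : Prop where
  map_axis : J e = e
  apply_apply : ∀ v, J (J v) = (2 * ⟪e, v⟫) • e - v
  inner_sq_add_inner_sq : ∀ v w, (⟪v, w⟫ - ⟪e, v⟫ * ⟪e, w⟫) ^ 2
    + (⟪v, J w⟫ - ⟪e, v⟫ * ⟪e, w⟫) ^ 2 = (‖v‖ ^ 2 - ⟪e, v⟫ ^ 2) * (‖w‖ ^ 2 - ⟪e, w⟫ ^ 2)

theorem exists_isQuarterTurn_single : ∃ J, IsQuarterTurn (EuclideanSpace.single 0 1) J := by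
  let L : E3 →ₗ[ℝ] E3 :=
    { toFun := fun v => !₂[v 0, -v 2, v 1]
      map_add' := fun v w => by ext i; fin_cases i <;> simp; ring
      map_smul' := fun c v => by ext i; fin_cases i <;> simp }
  have hnorm : ∀ v : E3, ‖v‖ ^ 2 = v 0 ^ 2 + v 1 ^ 2 + v 2 ^ 2 := fun v => by
    simp [EuclideanSpace.norm_sq_eq, Fin.sum_univ_three]
  have hinner : ∀ v w : E3, ⟪v, w⟫ = v 0 * w 0 + v 1 * w 1 + v 2 * w 2 := fun v w => by
    simp [PiLp.inner_apply, Fin.sum_univ_three, mul_comm]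
  have hL : ∀ v, ‖L v‖ = ‖v‖ := fun v => by
    rw [← sq_eq_sq₀ (norm_nonneg _) (norm_nonneg _), hnorm, hnorm]
    simp [L]
    ring
  refine ⟨LinearIsometry.toLinearIsometryEquiv ⟨L, hL⟩ rfl, ?_, fun v => ?_, fun v w => ?_⟩
  · ext i; fin_cases i <;> simp [L]
  · ext i; fin_cases i <;> simp [L, hinner]
    ring
  · simp [L, hinner, hnorm]
    ring

variable {e : E3} {J : E3 ≃ₗᵢ[ℝ] E3}

theorem IsQuarterTurn.conj (hJ : IsQuarterTurn e J) (R : E3 ≃ₗᵢ[ℝ] E3) :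
    IsQuarterTurn (R e) (R.symm.trans (J.trans R)) where
  map_axis := by simp [hJ.map_axis]
  apply_apply v := by
    obtain ⟨v, rfl⟩ := R.surjective v
    simp [hJ.apply_apply]
  inner_sq_add_inner_sq v w := by
    obtain ⟨v, rfl⟩ := R.surjective v
    obtain ⟨w, rfl⟩ := R.surjective w
    simpa using hJ.inner_sq_add_inner_sq v w

theorem exists_linearIsometryEquiv_apply_eq {V : Type*} [NormedAddCommGroup V]
    [InnerProductSpace ℝ V] {v w : V} (h : ‖v‖ = ‖w‖) : ∃ R : V ≃ₗᵢ[ℝ] V, R v = w :=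
  ⟨_, Submodule.reflection_sub h⟩

theorem exists_isQuarterTurn (he : ‖e‖ = 1) : ∃ J, IsQuarterTurn e J := by
  obtain ⟨J, hJ⟩ := exists_isQuarterTurn_single
  obtain ⟨R, rfl⟩ := exists_linearIsometryEquiv_apply_eq
    (show ‖(EuclideanSpace.single 0 1 : E3)‖ = ‖e‖ by simp [he])
  exact ⟨_, hJ.conj R⟩

namespace IsQuarterTurn

theorem inner_axis_apply (hJ : IsQuarterTurn e J) (v : E3) : ⟪e, J v⟫ = ⟪e, v⟫ := by
  conv_lhs => rw [← hJ.map_axis]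
  exact J.inner_map_map e v

theorem inner_axis_iterate (hJ : IsQuarterTurn e J) (v : E3) (k : ℕ) : ⟪e, J^[k] v⟫ = ⟪e, v⟫ := by
  induction k with
  | zero => rfl
  | succ k ih => rw [Function.iterate_succ_apply', hJ.inner_axis_apply, ih]

theorem sum_orbit {M : Type*} [AddCommMonoid M] (hJ : IsQuarterTurn e J) (f : E3 → M) (v : E3) :
    ∑ k ∈ Finset.range 4, f (J^[k] v)
      = (f v + f ((2 * ⟪e, v⟫) • e - v)) + (f (J v) + f ((2 * ⟪e, v⟫) • e - J v)) := by
  simp only [Finset.sum_range_succ, Finset.sum_range_zero, zero_add, Function.iterate_succ_apply',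
    Function.iterate_zero_apply]
  rw [hJ.apply_apply (J v), hJ.inner_axis_apply, hJ.apply_apply v]
  abel

theorem sum_orbit_inner_sq (hJ : IsQuarterTurn e J) (v w : E3) :
    ∑ k ∈ Finset.range 4, ⟪v, J^[k] w⟫ ^ 2
      = 4 * ⟪e, w⟫ ^ 2 * ⟪v, e⟫ ^ 2
        + 2 * (‖v‖ ^ 2 - ⟪v, e⟫ ^ 2) * (‖w‖ ^ 2 - ⟪e, w⟫ ^ 2) := by
  rw [hJ.sum_orbit (fun u => ⟪v, u⟫ ^ 2)]
  simp only [inner_sub_right, inner_smul_right]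
  have h := hJ.inner_sq_add_inner_sq v w
  rw [real_inner_comm v e] at h
  linear_combination 2 * h

theorem sum_orbit_secondMoment (hJ : IsQuarterTurn e J) {F : Measure E3}
    (h : Integrable (fun v => ‖v‖ ^ 2) F) (σ : E3) :
    ∑ k ∈ Finset.range 4, secondMoment F (J^[k] σ)
      = 4 * ⟪e, σ⟫ ^ 2 * secondMoment F e
        + 2 * (energy F - secondMoment F e) * (‖σ‖ ^ 2 - ⟪e, σ⟫ ^ 2) := by
  have he := integrable_inner_sq h e
  have hsub : Integrable (fun v => ‖v‖ ^ 2 - ⟪v, e⟫ ^ 2) F := h.sub he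
  simp only [secondMoment]
  rw [← integral_finsetSum _ fun k _ => integrable_inner_sq h _]
  simp only [hJ.sum_orbit_inner_sq, energy]
  rw [integral_add (he.const_mul _) ((hsub.const_mul _).mul_const _), integral_const_mul,
    integral_mul_const, integral_const_mul, integral_sub h he]

variable {F : Measure E3} {C r : ℝ} {σ : E3}

theorem norm_sum_orbit_sub_one_mul_sub_one_le {φ : E3 → ℂ} (hJ : IsQuarterTurn e J)
    (h : QuadraticBound C φ) (he : ‖e‖ = 1) (hσ : ‖σ‖ = 1) :
    ‖∑ k ∈ Finset.range 4,
        (φ ((r / 2) • (e + J^[k] σ)) - 1) * (φ ((r / 2) • (e - J^[k] σ)) - 1)‖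
      ≤ C ^ 2 * r ^ 4 * (1 - ⟪e, σ⟫ ^ 2) := by
  calc _ ≤ ∑ k ∈ Finset.range 4, C ^ 2 * r ^ 4 * (1 - ⟪e, σ⟫ ^ 2) / 4 := by
        refine norm_sum_le_of_le _ fun k _ => ?_
        have hk : ‖J^[k] σ‖ = 1 := by
          have hnorm : Function.Semiconj norm J id := J.norm_map
          simpa [hσ] using hnorm.iterate_right k σ
        simpa only [hJ.inner_axis_iterate] using h.norm_sub_one_mul_sub_one_le (r := r) he hk
    _ = _ := by
        rw [Finset.sum_const, Finset.card_range, nsmul_eq_mul]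
        push_cast
        ring

theorem norm_sum_orbit_charFnRemainder_le (hJ : IsQuarterTurn e J)
    (h : Integrable (fun v => ‖v‖ ^ 2) F) (hr : 0 ≤ r) (he : ‖e‖ = 1) (hσ : ‖σ‖ = 1) :
    ‖∑ k ∈ Finset.range 4, (charFnRemainder F ((r / 2) • (e + J^[k] σ))
        + charFnRemainder F ((r / 2) • (e - J^[k] σ)) - charFnRemainder F (r • e))‖
      ≤ 4 * r ^ 2 * (1 - ⟪e, σ⟫ ^ 2) * energyModulus F r := by
  rw [hJ.sum_orbit fun u => charFnRemainder F ((r / 2) • (e + u))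
    + charFnRemainder F ((r / 2) • (e - u)) - charFnRemainder F (r • e)]
  have hfirst := norm_charFnRemainder_halfTurn_le h hr he hσ rfl
  have hsecond := norm_charFnRemainder_halfTurn_le h hr he ((J.norm_map σ).trans hσ) rfl
  rw [hJ.inner_axis_apply] at hsecond
  exact (norm_add_le_of_le hfirst hsecond).trans_eq (by ring)

theorem norm_sum_orbit_collisionDefect_add_le [IsProbabilityMeasure F] (hJ : IsQuarterTurn e J)
    (h : QuadraticBound C (charFn F)) (hr : 0 ≤ r) (he : ‖e‖ = 1) (hσ : ‖σ‖ = 1) :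
    ‖∑ k ∈ Finset.range 4, collisionDefect (charFn F) (r • e) (J^[k] σ)
        + ((r ^ 2 / 2 * (1 - ⟪e, σ⟫ ^ 2) * (energy F - 3 * secondMoment F e) : ℝ) : ℂ)‖
      ≤ (1 - ⟪e, σ⟫ ^ 2) * (r ^ 2 * (4 * energyModulus F r + C ^ 2 * r ^ 2)) := by
  have hprod := hJ.norm_sum_orbit_sub_one_mul_sub_one_le (r := r) h he hσ
  have hrem := hJ.norm_sum_orbit_charFnRemainder_le h.integrable_norm_sq hr he hσ
  refine ((congrArg norm ?_).trans_le (norm_add_le_of_le hprod hrem)).trans_eq (by ring)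
  have hsecond : r ^ 2 / 4 * (∑ k ∈ Finset.range 4, secondMoment F (J^[k] σ)
      - 4 * secondMoment F e)
      = r ^ 2 / 2 * (1 - ⟪e, σ⟫ ^ 2) * (energy F - 3 * secondMoment F e) := by
    rw [hJ.sum_orbit_secondMoment h.integrable_norm_sq σ, hσ]
    ring
  rw [← hsecond]
  simp only [h.collisionDefect_charFn_eq hr he, Finset.sum_sub_distrib, Finset.sum_add_distrib,
    ← Complex.ofReal_sum, ← Finset.mul_sum, Finset.sum_const, Finset.card_range, nsmul_eq_mul]
  push_cast
  ring

end IsQuarterTurn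

end QuarterTurn

section MeasurePreserving

variable {α β E : Type*} [MeasurableSpace α] [MeasurableSpace β] {μ : Measure α} {ν : Measure β}
  [NormedAddCommGroup E]

theorem integral_comp_of_measurePreserving [NormedSpace ℝ E] {T : α → β} {f : β → E}
    (hT : MeasurePreserving T μ ν) (hf : Integrable f ν) : ∫ x, f (T x) ∂μ = ∫ y, f y ∂ν := by
  obtain rfl := hT.map_eq
  exact (integral_map hT.aemeasurable hf.aestronglyMeasurable).symm

variable {T : α → α} {f : α → E}

theorem integrable_sum_iterate (hT : MeasurePreserving T μ μ) (hf : Integrable f μ) (n : ℕ) :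
    Integrable (fun x => ∑ k ∈ Finset.range n, f (T^[k] x)) μ :=
  integrable_finsetSum _ fun k _ => (hT.iterate k).integrable_comp_of_integrable hf

theorem integral_sum_iterate [NormedSpace ℝ E] (hT : MeasurePreserving T μ μ)
    (hf : Integrable f μ) (n : ℕ) :
    ∫ x, ∑ k ∈ Finset.range n, f (T^[k] x) ∂μ = n • ∫ x, f x ∂μ := by
  calc _ = ∑ k ∈ Finset.range n, ∫ x, f (T^[k] x) ∂μ :=
        integral_finsetSum _ fun k _ => (hT.iterate k).integrable_comp_of_integrable hf
    _ = _ := by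
        simp only [integral_comp_of_measurePreserving (hT.iterate _) hf, Finset.sum_const,
          Finset.card_range]

end MeasurePreserving

theorem frequently_ae_norm_lt_mul {α E : Type*} [MeasurableSpace α] {μ : Measure α}
    [NormedAddCommGroup E] [NormedSpace ℝ E] {a w : α → ℝ} {f : α → E}
    (hf : Integrable (fun x => a x • f x) μ) (haw : AEStronglyMeasurable (fun x => a x * w x) μ)
    (hw : 0 ≤ᵐ[μ] w) (hnot : ¬Integrable (fun x => a x * w x) μ) {ε : ℝ} (hε : 0 < ε) :
    ∃ᵐ x ∂μ, ‖f x‖ < ε * w x := by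
  refine fun hle => hnot ((hf.norm.const_mul ε⁻¹).mono' haw ?_)
  filter_upwards [hle, hw] with x hx hwx
  rw [norm_mul, Real.norm_of_nonneg hwx, norm_smul, mul_left_comm]
  exact mul_le_mul_of_nonneg_left ((le_inv_mul_iff₀ hε).2 (not_lt.1 hx)) (norm_nonneg _)

section SphereMeasure

/-- The surface measure of the unit sphere, as a measure on the ambient space. -/
def sphereMeasure : Measure E3 := sphμ.map Subtype.val

theorem measurableEmbedding_sphere_coe :
    MeasurableEmbedding (Subtype.val : sphere (0 : E3) 1 → E3) :=
  .subtype_coe isClosed_sphere.measurableSet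

theorem ae_sphereMeasure_norm_eq_one : ∀ᵐ σ ∂sphereMeasure, ‖σ‖ = 1 :=
  measurableEmbedding_sphere_coe.ae_map_iff.2 (ae_of_all _ fun σ => norm_eq_of_mem_sphere σ)

open scoped Pointwise in
theorem sphereMeasure_apply {A : Set E3} (hA : MeasurableSet A) :
    sphereMeasure A = 3 * volume (Ioo (0 : ℝ) 1 • (A ∩ sphere (0 : E3) 1)) := by
  rw [sphereMeasure, sphμ, Measure.map_apply measurable_subtype_coe hA,
    Measure.toSphere_apply' _ (measurable_subtype_coe hA), Subtype.image_preimage_coe, inter_comm]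
  simp

open scoped Pointwise in
theorem measurePreserving_sphereMeasure (R : E3 ≃ₗᵢ[ℝ] E3) :
    MeasurePreserving R sphereMeasure sphereMeasure := by
  have hR : Measurable R := R.continuous.measurable
  refine ⟨hR, Measure.ext fun A hA => ?_⟩
  have hcone : Ioo (0 : ℝ) 1 • (R ⁻¹' A ∩ sphere (0 : E3) 1)
      = R ⁻¹' (Ioo (0 : ℝ) 1 • (A ∩ sphere (0 : E3) 1)) := by
    have hsphere : R ⁻¹' sphere (0 : E3) 1 = sphere 0 1 := by ext; simp
    conv_lhs => rw [← hsphere, ← preimage_inter]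
    ext x
    simp only [Set.mem_smul, mem_preimage]
    refine ⟨fun ⟨a, ha, y, hy, hx⟩ => ⟨a, ha, R y, hy, by simp [← hx]⟩,
      fun ⟨a, ha, y, hy, hx⟩ => ⟨a, ha, R.symm y, by simpa using hy, R.injective (by simpa)⟩⟩
  rw [Measure.map_apply hR hA, sphereMeasure_apply (hR hA), sphereMeasure_apply hA, hcone,
    R.measurePreserving.measure_preimage_emb R.toHomeomorph.measurableEmbedding]

/-- The distribution of the component of the sphere measure along an axis; by rotation invariance
it does not depend on the axis. -/
def zonalMeasure : Measure ℝ := sphereMeasure.map fun σ => ⟪EuclideanSpace.single 0 1, σ⟫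

variable {e : E3}

theorem measurePreserving_inner_sphereMeasure (he : ‖e‖ = 1) :
    MeasurePreserving (fun σ => ⟪e, σ⟫) sphereMeasure zonalMeasure := by
  obtain ⟨R, rfl⟩ := exists_linearIsometryEquiv_apply_eq
    (show ‖(EuclideanSpace.single 0 1 : E3)‖ = ‖e‖ by simp [he])
  have hsymm : (fun σ => ⟪R (EuclideanSpace.single 0 1), σ⟫)
      = (fun σ => ⟪(EuclideanSpace.single 0 1 : E3), σ⟫) ∘ R.symm := by
    ext σ
    rw [Function.comp_apply, ← R.inner_map_map _ (R.symm σ), R.apply_symm_apply]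
  rw [hsymm]
  exact MeasurePreserving.comp ⟨by fun_prop, rfl⟩ (measurePreserving_sphereMeasure R.symm)

end SphereMeasure

section CollisionIntegral

/-- The collision integrand `b(ξ·σ/|ξ|) (φ(ξ⁺) φ(ξ⁻) - φ(ξ))`, for a direction `σ` taken in the
ambient space. -/
def collisionIntegrand (b : ℝ → ℝ) (φ : E3 → ℂ) (ξ σ : E3) : ℂ :=
  b (⟪ξ, σ⟫ / ‖ξ‖) • collisionDefect φ ξ σ

/-- The angular weight `b(c) (1 - c²)`, where `c` is the cosine of the scattering angle. -/
def transferWeight (b : ℝ → ℝ) (c : ℝ) : ℝ := b c * (1 - c ^ 2)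

/-- The cross section for momentum transfer `∫ b(e·σ) (1 - (e·σ)²) dσ`, with junk value `0` when the
integral diverges. -/
def momentumTransfer (b : ℝ → ℝ) : ℝ := ∫ c, transferWeight b c ∂zonalMeasure

variable {b : ℝ → ℝ} {φ : E3 → ℂ} {F : Measure E3} {C r : ℝ} {e : E3}

theorem collisionIntegrand_coe (b : ℝ → ℝ) (ψ : ℝ → E3 → ℂ) (t : ℝ) (ξ : E3)
    (σ : sphere (0 : E3) 1) :
    collisionIntegrand b (ψ t) ξ σ = bobylevIntegrand b ψ t ξ σ :=
  Complex.real_smul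

theorem collisionIntegrand_smul (b : ℝ → ℝ) (φ : E3 → ℂ) (hr : 0 < r) (he : ‖e‖ = 1) (σ : E3) :
    collisionIntegrand b φ (r • e) σ = b ⟪e, σ⟫ • collisionDefect φ (r • e) σ := by
  rw [collisionIntegrand, norm_smul, he, mul_one, Real.norm_of_nonneg hr.le, real_inner_smul_left,
    mul_div_cancel_left₀ _ hr.ne']

theorem measurable_transferWeight (hb : Measurable b) : Measurable (transferWeight b) := by
  unfold transferWeight
  fun_prop

theorem IsQuarterTurn.sum_orbit_collisionIntegrand {J : E3 ≃ₗᵢ[ℝ] E3} (hJ : IsQuarterTurn e J)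
    (b : ℝ → ℝ) (φ : E3 → ℂ) (hr : 0 < r) (he : ‖e‖ = 1) (σ : E3) :
    ∑ k ∈ Finset.range 4, collisionIntegrand b φ (r • e) (J^[k] σ)
      = b ⟪e, σ⟫ • ∑ k ∈ Finset.range 4, collisionDefect φ (r • e) (J^[k] σ) := by
  simp only [collisionIntegrand_smul b φ hr he, hJ.inner_axis_iterate, Finset.smul_sum]

theorem IsQuarterTurn.norm_sum_orbit_collisionIntegrand_add_le [IsProbabilityMeasure F]
    {J : E3 ≃ₗᵢ[ℝ] E3} (hJ : IsQuarterTurn e J) (h : QuadraticBound C (charFn F))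
    (hb : ∀ x, 0 ≤ b x) (hr : 0 < r) (he : ‖e‖ = 1) {σ : E3} (hσ : ‖σ‖ = 1) :
    ‖∑ k ∈ Finset.range 4, collisionIntegrand b (charFn F) (r • e) (J^[k] σ)
        + ((transferWeight b ⟪e, σ⟫ * (r ^ 2 / 2 * (energy F - 3 * secondMoment F e)) : ℝ) : ℂ)‖
      ≤ transferWeight b ⟪e, σ⟫ * (r ^ 2 * (4 * energyModulus F r + C ^ 2 * r ^ 2)) := by
  calc _ = ‖b ⟪e, σ⟫ • (∑ k ∈ Finset.range 4, collisionDefect (charFn F) (r • e) (J^[k] σ)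
        + ((r ^ 2 / 2 * (1 - ⟪e, σ⟫ ^ 2) * (energy F - 3 * secondMoment F e) : ℝ) : ℂ))‖ := by
        rw [hJ.sum_orbit_collisionIntegrand b _ hr he, smul_add, transferWeight]
        simp only [Complex.real_smul]
        push_cast
        ring_nf
    _ = b ⟪e, σ⟫ * ‖∑ k ∈ Finset.range 4, collisionDefect (charFn F) (r • e) (J^[k] σ)
        + ((r ^ 2 / 2 * (1 - ⟪e, σ⟫ ^ 2) * (energy F - 3 * secondMoment F e) : ℝ) : ℂ)‖ := by
        rw [norm_smul, Real.norm_of_nonneg (hb _)]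
    _ ≤ b ⟪e, σ⟫ * ((1 - ⟪e, σ⟫ ^ 2) * (r ^ 2 * (4 * energyModulus F r + C ^ 2 * r ^ 2))) :=
        mul_le_mul_of_nonneg_left (hJ.norm_sum_orbit_collisionDefect_add_le h hr.le he hσ) (hb _)
    _ = _ := by rw [transferWeight]; ring

theorem QuadraticBound.norm_integral_collisionIntegrand_add_le [IsProbabilityMeasure F]
    (h : QuadraticBound C (charFn F)) (hb : ∀ x, 0 ≤ b x) (hr : 0 < r) (he : ‖e‖ = 1)
    (hint : Integrable (collisionIntegrand b (charFn F) (r • e)) sphereMeasure)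
    (hconv : Integrable (transferWeight b) zonalMeasure) :
    ‖∫ σ, collisionIntegrand b (charFn F) (r • e) σ ∂sphereMeasure
        + ((momentumTransfer b * (r ^ 2 / 8 * (energy F - 3 * secondMoment F e)) : ℝ) : ℂ)‖
      ≤ momentumTransfer b * (r ^ 2 / 4 * (4 * energyModulus F r + C ^ 2 * r ^ 2)) := by
  obtain ⟨J, hJ⟩ := exists_isQuarterTurn he
  have hrot := measurePreserving_sphereMeasure J
  have hzonal := measurePreserving_inner_sphereMeasure he
  have hwint : Integrable (fun σ => transferWeight b ⟪e, σ⟫) sphereMeasure :=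
    hzonal.integrable_comp_of_integrable hconv
  set D := r ^ 2 / 2 * (energy F - 3 * secondMoment F e) with hD
  have hlead : Integrable (fun σ => ((transferWeight b ⟪e, σ⟫ * D : ℝ) : ℂ)) sphereMeasure :=
    (hwint.mul_const D).ofReal
  set I := ∫ σ, collisionIntegrand b (charFn F) (r • e) σ ∂sphereMeasure
  have horbit : ∫ σ, (∑ k ∈ Finset.range 4, collisionIntegrand b (charFn F) (r • e) (J^[k] σ)
      + ((transferWeight b ⟪e, σ⟫ * D : ℝ) : ℂ)) ∂sphereMeasure
      = 4 * I + ((momentumTransfer b * D : ℝ) : ℂ) := by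
    rw [integral_add (integrable_sum_iterate hrot hint 4) hlead,
      integral_sum_iterate hrot hint, integral_complex_ofReal, integral_mul_const,
      integral_comp_of_measurePreserving hzonal hconv, momentumTransfer, nsmul_eq_mul]
    rfl
  have hbound := norm_integral_le_of_norm_le (hwint.mul_const
      (r ^ 2 * (4 * energyModulus F r + C ^ 2 * r ^ 2))) (ae_sphereMeasure_norm_eq_one.mono
    fun σ hσ => hJ.norm_sum_orbit_collisionIntegrand_add_le h hb hr he hσ)
  rw [horbit, integral_mul_const, integral_comp_of_measurePreserving hzonal hconv,
    ← momentumTransfer] at hbound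
  calc _ = ‖(4 * I + ((momentumTransfer b * D : ℝ) : ℂ)) / 4‖ := by
        rw [hD]
        congr 1
        push_cast
        ring
    _ ≤ _ := by
        rw [norm_div, Complex.norm_ofNat]
        linarith

end CollisionIntegral

section MaximumPrinciple

variable {V : Type*} [NormedAddCommGroup V] {u : V → ℝ}

theorem continuous_div_norm_sq_of_isLittleO (hu : Continuous u)
    (hu0 : u =o[𝓝 0] fun ξ => ‖ξ‖ ^ 2) : Continuous fun ξ => u ξ / ‖ξ‖ ^ 2 := by
  refine continuous_iff_continuousAt.2 fun ξ => ?_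
  obtain rfl | hξ := eq_or_ne ξ 0
  · simpa [ContinuousAt] using hu0.tendsto_div_nhds_zero
  · exact hu.continuousAt.div (by fun_prop) (by simpa using hξ)

theorem nonpos_of_le_add_of_isLittleO [ProperSpace V] (hu : Continuous u)
    (hu0 : u =o[𝓝 0] fun ξ => ‖ξ‖ ^ 2)
    (hsplit : ∀ ξ ≠ 0, ∀ ε > 0, ∃ η ζ : V, ‖η‖ ^ 2 + ‖ζ‖ ^ 2 = ‖ξ‖ ^ 2 ∧ 0 < ‖η‖ ^ 2 * ‖ζ‖ ^ 2 ∧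
      u ξ ≤ u η + u ζ + ε * (‖η‖ ^ 2 * ‖ζ‖ ^ 2)) (ξ₀ : V) : u ξ₀ ≤ 0 := by
  have hu_eq : ∀ ξ, u ξ = ‖ξ‖ ^ 2 * (u ξ / ‖ξ‖ ^ 2) := fun ξ => by
    obtain rfl | hξ := eq_or_ne ξ 0
    · simpa using hu0.isBigO.eq_zero_imp.self_of_nhds
    · rw [mul_div_cancel₀ _ (by simpa using hξ)]
  by_contra! hpos
  have hξ₀ : 0 < ‖ξ₀‖ := norm_pos_iff.2 fun h => by
    rw [hu_eq, h] at hpos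
    simp at hpos
  obtain ⟨δ, hδ, hδ_lt⟩ : ∃ δ > 0, δ * ‖ξ₀‖ ^ 2 < u ξ₀ / ‖ξ₀‖ ^ 2 := by
    refine ⟨u ξ₀ / ‖ξ₀‖ ^ 2 / ‖ξ₀‖ ^ 2 / 2, by positivity, ?_⟩
    rw [div_mul_eq_mul_div, div_mul_cancel₀ _ (by positivity)]
    exact half_lt_self (by positivity)
  -- The penalty `δ‖ξ‖²` is strictly superadditive along a splitting, so it rules out a nonzero
  -- maximum point of the quotient.
  let K : V → ℝ := fun ξ => u ξ / ‖ξ‖ ^ 2 - δ * ‖ξ‖ ^ 2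
  have hK : Continuous K := (continuous_div_norm_sq_of_isLittleO hu hu0).sub (by fun_prop)
  obtain ⟨ξ, hξ_mem, hξ_max⟩ := (isCompact_closedBall (0 : V) ‖ξ₀‖).exists_isMaxOn ⟨0, by simp⟩
    hK.continuousOn
  have hKpos : 0 < K ξ :=
    (sub_pos.2 hδ_lt).trans_le (hξ_max (by simp : ξ₀ ∈ closedBall 0 ‖ξ₀‖))
  obtain ⟨η, ζ, hsum, hprod, hle⟩ := hsplit ξ (fun h => by simp [h, K] at hKpos) δ hδ
  have hmax : ∀ θ : V, ‖θ‖ ^ 2 ≤ ‖ξ‖ ^ 2 → u θ ≤ ‖θ‖ ^ 2 * (K ξ + δ * ‖θ‖ ^ 2) := fun θ hθ => by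
    have hmem : θ ∈ closedBall 0 ‖ξ₀‖ := by
      rw [mem_closedBall_zero_iff] at hξ_mem ⊢
      exact ((sq_le_sq₀ (norm_nonneg _) (norm_nonneg _)).1 hθ).trans hξ_mem
    rw [hu_eq θ]
    gcongr
    exact sub_le_iff_le_add.1 (hξ_max hmem)
  have hη := hmax η (by linarith [sq_nonneg ‖ζ‖])
  have hζ := hmax ζ (by linarith [sq_nonneg ‖η‖])
  have hξ_eq : u ξ = ‖ξ‖ ^ 2 * (K ξ + δ * ‖ξ‖ ^ 2) := by rw [hu_eq ξ, sub_add_cancel]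
  rw [hξ_eq, ← hsum] at hle
  linarith [mul_pos hδ hprod]

end MaximumPrinciple

section GaussianRigidity

/-- The characteristic function of a centred Gaussian with covariance `q` times the identity. -/
def gaussianCharFn (q : ℝ) (ξ : E3) : ℂ := (Real.exp (-(q / 2 * ‖ξ‖ ^ 2)) : ℝ)

variable {φ g : E3 → ℂ} {F : Measure E3} {C r q : ℝ} {e σ : E3}

theorem continuous_gaussianCharFn (q : ℝ) : Continuous (gaussianCharFn q) := by
  unfold gaussianCharFn
  fun_prop

theorem norm_gaussianCharFn_le_one (hq : 0 ≤ q) (ξ : E3) : ‖gaussianCharFn q ξ‖ ≤ 1 := by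
  rw [gaussianCharFn, Complex.norm_real, Real.norm_of_nonneg (Real.exp_nonneg _),
    Real.exp_le_one_iff, Left.neg_nonpos_iff]
  positivity

theorem collisionDefect_gaussianCharFn (q : ℝ) (hr : 0 ≤ r) (he : ‖e‖ = 1) (hσ : ‖σ‖ = 1) :
    collisionDefect (gaussianCharFn q) (r • e) σ = 0 := by
  rw [collisionDefect_smul _ hr he, sub_eq_zero]
  simp only [gaussianCharFn]
  rw [norm_half_smul_add_sq he hσ, norm_half_smul_sub_sq he hσ, norm_smul, he,
    Real.norm_of_nonneg hr, ← Complex.ofReal_mul, ← Real.exp_add]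
  ring_nf

theorem isLittleO_gaussianCharFn (q : ℝ) :
    (fun ξ => gaussianCharFn q ξ - 1 + ((q / 2 * ‖ξ‖ ^ 2 : ℝ) : ℂ)) =o[𝓝 0]
      fun ξ => ‖ξ‖ ^ 2 := by
  have hexp : (fun x : ℝ => Real.exp x - 1 - x) =o[𝓝 0] fun x => x := by
    simpa using hasDerivAt_iff_isLittleO_nhds_zero.1 (Real.hasDerivAt_exp 0)
  have hlim : Tendsto (fun ξ : E3 => -(q / 2 * ‖ξ‖ ^ 2)) (𝓝 0) (𝓝 0) :=
    Continuous.tendsto' (by fun_prop) _ _ (by simp)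
  have hquad : (fun ξ : E3 => -(q / 2 * ‖ξ‖ ^ 2)) =O[𝓝 0] fun ξ => ‖ξ‖ ^ 2 :=
    ((Asymptotics.isBigO_refl _ _).const_mul_left _).neg_left
  have hcomp := (hexp.comp_tendsto hlim).trans_isBigO hquad
  refine (hcomp.norm_left.congr_left fun ξ => ?_).of_norm_left
  rw [Function.comp_apply, ← Complex.norm_real, gaussianCharFn]
  congr 1
  push_cast
  ring

theorem isLittleO_charFnRemainder (h : Integrable (fun v => ‖v‖ ^ 2) F) :
    charFnRemainder F =o[𝓝 0] fun ξ => ‖ξ‖ ^ 2 := by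
  have hmod : Tendsto (fun ξ : E3 => 2 * energyModulus F ‖ξ‖) (𝓝 0) (𝓝 0) := by
    have hnorm : Tendsto (fun ξ : E3 => ‖ξ‖) (𝓝 0) (𝓝[≥] 0) :=
      tendsto_nhdsWithin_iff.2 ⟨tendsto_norm_zero, .of_forall fun ξ => norm_nonneg ξ⟩
    simpa using ((tendsto_energyModulus h).comp hnorm).const_mul 2
  have hprod := ((Asymptotics.isLittleO_one_iff ℝ).2 hmod).mul_isBigO
    (Asymptotics.isBigO_refl (fun ξ : E3 => ‖ξ‖ ^ 2) _)
  simp only [one_mul] at hprod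
  refine (Asymptotics.isBigO_of_le _ fun ξ => ?_).trans_isLittleO hprod
  refine (norm_charFnRemainder_le h ξ).trans ((le_of_eq ?_).trans (le_abs_self _))
  ring

theorem norm_sub_le_add_norm_collisionDefect_sub (hφ : ∀ ξ, ‖φ ξ‖ ≤ 1) (hg : ∀ ξ, ‖g ξ‖ ≤ 1)
    (hr : 0 ≤ r) (he : ‖e‖ = 1) (σ : E3) :
    ‖φ (r • e) - g (r • e)‖
      ≤ ‖φ ((r / 2) • (e + σ)) - g ((r / 2) • (e + σ))‖
        + ‖φ ((r / 2) • (e - σ)) - g ((r / 2) • (e - σ))‖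
        + ‖collisionDefect φ (r • e) σ - collisionDefect g (r • e) σ‖ := by
  rw [collisionDefect_smul _ hr he, collisionDefect_smul _ hr he]
  set η := (r / 2) • (e + σ)
  set ζ := (r / 2) • (e - σ)
  have hfirst : ‖(φ η - g η) * φ ζ‖ ≤ ‖φ η - g η‖ :=
    (norm_mul _ _).trans_le (mul_le_of_le_one_right (norm_nonneg _) (hφ ζ))
  have hsecond : ‖g η * (φ ζ - g ζ)‖ ≤ ‖φ ζ - g ζ‖ :=
    (norm_mul _ _).trans_le (mul_le_of_le_one_left (norm_nonneg _) (hg η))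
  calc ‖φ (r • e) - g (r • e)‖
      = ‖(φ η - g η) * φ ζ + g η * (φ ζ - g ζ)
          - (φ η * φ ζ - φ (r • e) - (g η * g ζ - g (r • e)))‖ := by ring_nf
    _ ≤ _ := norm_sub_le_of_le (norm_add_le_of_le hfirst hsecond) le_rfl

theorem norm_charFn_le_one [IsProbabilityMeasure F] (ξ : E3) : ‖charFn F ξ‖ ≤ 1 := by
  rw [charFn_eq_charFun]
  exact norm_charFun_le_one _

theorem exists_eq_nonneg_smul_unit {V : Type*} [NormedAddCommGroup V] [NormedSpace ℝ V]
    [Nontrivial V] (ξ : V) : ∃ r : ℝ, 0 ≤ r ∧ ∃ e : V, ‖e‖ = 1 ∧ ξ = r • e := by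
  obtain rfl | hξ := eq_or_ne ξ 0
  · obtain ⟨e, he⟩ := exists_norm_eq V zero_le_one
    exact ⟨0, le_rfl, e, he, (zero_smul ℝ e).symm⟩
  · refine ⟨‖ξ‖, norm_nonneg ξ, ‖ξ‖⁻¹ • ξ, by simpa using norm_smul_inv_norm (𝕜 := ℝ) hξ, ?_⟩
    rw [smul_inv_smul₀ (norm_ne_zero_iff.2 hξ)]

theorem QuadraticBound.isLittleO_charFn_sub_gaussianCharFn [IsProbabilityMeasure F]
    (h : QuadraticBound C (charFn F)) (hiso : ∀ e, ‖e‖ = 1 → secondMoment F e = q) :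
    (fun ξ => charFn F ξ - gaussianCharFn q ξ) =o[𝓝 0] fun ξ => ‖ξ‖ ^ 2 := by
  refine ((isLittleO_charFnRemainder h.integrable_norm_sq).sub
    (isLittleO_gaussianCharFn q)).congr_left fun ξ => ?_
  have hsecond : secondMoment F ξ = q * ‖ξ‖ ^ 2 := by
    obtain ⟨r, hr, e, he, rfl⟩ := exists_eq_nonneg_smul_unit ξ
    rw [secondMoment_smul, hiso e he, norm_smul, he, Real.norm_of_nonneg hr]
    ring
  have hφ := h.charFn_sub_one_eq ξ
  rw [hsecond] at hφ
  push_cast at hφ ⊢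
  linear_combination -hφ

theorem QuadraticBound.charFn_eq_gaussianCharFn [IsProbabilityMeasure F]
    (h : QuadraticBound C (charFn F)) (hiso : ∀ e, ‖e‖ = 1 → secondMoment F e = q)
    (hdefect : ∀ r : ℝ, 0 < r → ∀ e, ‖e‖ = 1 → ∀ ε > 0, ∃ σ, ‖σ‖ = 1 ∧
      ‖collisionDefect (charFn F) (r • e) σ‖ < ε * (1 - ⟪e, σ⟫ ^ 2)) :
    charFn F = gaussianCharFn q := by
  have hq : 0 ≤ q := by
    obtain ⟨e, he⟩ := exists_norm_eq E3 zero_le_one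
    exact hiso e he ▸ secondMoment_nonneg F e
  suffices hle : ∀ ξ, ‖charFn F ξ - gaussianCharFn q ξ‖ ≤ 0 from
    funext fun ξ => sub_eq_zero.1 (norm_le_zero_iff.1 (hle ξ))
  refine nonpos_of_le_add_of_isLittleO
    (continuous_charFn.sub (continuous_gaussianCharFn q)).norm
    (h.isLittleO_charFn_sub_gaussianCharFn hiso).norm_left fun ξ hξ ε hε => ?_
  obtain ⟨r, hr, e, he, rfl⟩ := exists_eq_nonneg_smul_unit ξ
  have hr : 0 < r := hr.lt_of_ne' fun h0 => hξ (by rw [h0, zero_smul])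
  obtain ⟨σ, hσ, hlt⟩ := hdefect r hr e he (ε * (r ^ 4 / 4)) (by positivity)
  have hc : 0 < 1 - ⟪e, σ⟫ ^ 2 :=
    pos_of_mul_pos_right ((norm_nonneg _).trans_lt hlt) (by positivity)
  have hprod : ‖(r / 2) • (e + σ)‖ ^ 2 * ‖(r / 2) • (e - σ)‖ ^ 2
      = r ^ 4 / 4 * (1 - ⟪e, σ⟫ ^ 2) := by
    rw [norm_half_smul_add_sq he hσ, norm_half_smul_sub_sq he hσ]
    ring
  refine ⟨(r / 2) • (e + σ), (r / 2) • (e - σ), ?_, by rw [hprod]; positivity, ?_⟩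
  · rw [norm_half_smul_add_sq he hσ, norm_half_smul_sub_sq he hσ, norm_smul, he,
      Real.norm_of_nonneg hr.le]
    ring
  · refine (norm_sub_le_add_norm_collisionDefect_sub norm_charFn_le_one
      (norm_gaussianCharFn_le_one hq) hr.le he σ).trans ?_
    rw [collisionDefect_gaussianCharFn q hr.le he hσ, sub_zero, hprod, ← mul_assoc]
    gcongr

end GaussianRigidity

section DivergentTransfer

variable {b : ℝ → ℝ} {φ : E3 → ℂ} {F : Measure E3} {C ε r : ℝ} {e : E3}

theorem exists_norm_lt_of_not_integrable_transferWeight {f : E3 → ℂ} (hb : Measurable b)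
    (he : ‖e‖ = 1) (hf : Integrable (fun σ => b ⟪e, σ⟫ • f σ) sphereMeasure)
    (hdiv : ¬Integrable (transferWeight b) zonalMeasure) (hε : 0 < ε) :
    ∃ σ, ‖σ‖ = 1 ∧ ‖f σ‖ < ε * (1 - ⟪e, σ⟫ ^ 2) := by
  have hzonal := measurePreserving_inner_sphereMeasure he
  have hmeas := measurable_transferWeight hb
  have hfreq := frequently_ae_norm_lt_mul hf
    (hmeas.comp hzonal.measurable).aestronglyMeasurable
    (ae_sphereMeasure_norm_eq_one.mono fun σ hσ => one_sub_inner_sq_nonneg he hσ)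
    (mt (hzonal.integrable_comp hmeas.aestronglyMeasurable).1 hdiv) hε
  obtain ⟨σ, hlt, hσ⟩ := (hfreq.and_eventually ae_sphereMeasure_norm_eq_one).exists
  exact ⟨σ, hσ, hlt⟩

theorem QuadraticBound.three_mul_secondMoment_eq_energy [IsProbabilityMeasure F]
    (h : QuadraticBound C (charFn F)) (hb : Measurable b)
    (hdiv : ¬Integrable (transferWeight b) zonalMeasure) (he : ‖e‖ = 1)
    (hint : ∀ r : ℝ, 0 < r → Integrable (collisionIntegrand b (charFn F) (r • e)) sphereMeasure) :
    3 * secondMoment F e = energy F := by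
  obtain ⟨J, hJ⟩ := exists_isQuarterTurn he
  set D := energy F - 3 * secondMoment F e
  have hbound : ∀ r : ℝ, 0 < r → |D| / 2 ≤ 4 * energyModulus F r + C ^ 2 * r ^ 2 + r := by
    intro r hr
    have horbit := integrable_sum_iterate (measurePreserving_sphereMeasure J) (hint r hr) 4
    simp only [hJ.sum_orbit_collisionIntegrand b _ hr he] at horbit
    obtain ⟨σ, hσ, hlt⟩ := exists_norm_lt_of_not_integrable_transferWeight hb he horbit hdiv
      (show 0 < r ^ 3 by positivity)
    have hc : 0 < 1 - ⟪e, σ⟫ ^ 2 :=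
      pos_of_mul_pos_right ((norm_nonneg _).trans_lt hlt) (by positivity)
    have hdefect := norm_sub_le_of_le
      (hJ.norm_sum_orbit_collisionDefect_add_le h hr.le he hσ) hlt.le
    rw [add_sub_cancel_left, Complex.norm_real, Real.norm_eq_abs, abs_mul,
      abs_of_pos (show 0 < r ^ 2 / 2 * (1 - ⟪e, σ⟫ ^ 2) by positivity)] at hdefect
    refine le_of_mul_le_mul_left (hdefect.trans_eq' ?_ |>.trans_eq ?_)
      (show 0 < r ^ 2 * (1 - ⟪e, σ⟫ ^ 2) by positivity) <;> ring
  have hlim : Tendsto (fun r => 4 * energyModulus F r + C ^ 2 * r ^ 2 + r) (𝓝[>] 0) (𝓝 0) := by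
    have hpoly : Tendsto (fun r : ℝ => C ^ 2 * r ^ 2 + r) (𝓝[>] 0) (𝓝 0) :=
      (Continuous.tendsto' (by fun_prop) 0 0 (by simp)).mono_left nhdsWithin_le_nhds
    have hmod := (tendsto_energyModulus h.integrable_norm_sq).mono_left
      (nhdsWithin_mono 0 Ioi_subset_Ici_self)
    simpa [add_assoc] using (hmod.const_mul 4).add hpoly
  have hD_zero : |D| / 2 ≤ 0 :=
    ge_of_tendsto hlim (eventually_mem_nhdsWithin.mono fun r hr => hbound r hr)
  linarith [abs_nonpos_iff.1 (show |D| ≤ 0 by linarith)]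

theorem QuadraticBound.charFn_eq_gaussianCharFn_of_not_integrable [IsProbabilityMeasure F]
    (h : QuadraticBound C (charFn F)) (hb : Measurable b)
    (hdiv : ¬Integrable (transferWeight b) zonalMeasure)
    (hint : ∀ ξ, Integrable (collisionIntegrand b (charFn F) ξ) sphereMeasure) :
    charFn F = gaussianCharFn (energy F / 3) := by
  refine h.charFn_eq_gaussianCharFn (fun e he => ?_) fun r hr e he ε hε => ?_
  · rw [← h.three_mul_secondMoment_eq_energy hb hdiv he fun r _ => hint (r • e)]
    ring
  · exact exists_norm_lt_of_not_integrable_transferWeight hb he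
      ((hint (r • e)).congr (ae_of_all _ (collisionIntegrand_smul b _ hr he))) hdiv hε

theorem integral_collisionIntegrand_gaussianCharFn (b : ℝ → ℝ) (q : ℝ) (hr : 0 ≤ r)
    (he : ‖e‖ = 1) :
    ∫ σ, collisionIntegrand b (gaussianCharFn q) (r • e) σ ∂sphereMeasure = 0 := by
  refine integral_eq_zero_of_ae (ae_sphereMeasure_norm_eq_one.mono fun σ hσ => ?_)
  rw [collisionIntegrand, collisionDefect_gaussianCharFn q hr he hσ, smul_zero, Pi.zero_apply]

end DivergentTransfer

section OrthonormalSum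

variable {ι : Type*} [Fintype ι] {b : ℝ → ℝ} {F : Measure E3} [IsProbabilityMeasure F] {C r : ℝ}

theorem momentumTransfer_nonneg (hb : ∀ x, 0 ≤ b x) : 0 ≤ momentumTransfer b := by
  refine integral_nonneg_of_ae (Eventually.mono ?_ fun c hc => mul_nonneg (hb c) hc)
  refine (ae_map_iff (by fun_prop) (measurableSet_le measurable_const (by fun_prop))).2 ?_
  exact ae_sphereMeasure_norm_eq_one.mono fun σ hσ => one_sub_inner_sq_nonneg (by simp) hσ

theorem QuadraticBound.norm_sum_integral_collisionIntegrand_le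
    (h : QuadraticBound C (charFn F)) (hb_meas : Measurable b) (hb : ∀ x, 0 ≤ b x)
    (hint : ∀ ξ, Integrable (collisionIntegrand b (charFn F) ξ) sphereMeasure) (hr : 0 < r)
    (e : OrthonormalBasis ι ℝ E3) :
    ‖∑ i, ∫ σ, collisionIntegrand b (charFn F) (r • e i) σ ∂sphereMeasure‖
      ≤ r ^ 2 * (3 / 4 * momentumTransfer b * (4 * energyModulus F r + C ^ 2 * r ^ 2)) := by
  by_cases hconv : Integrable (transferWeight b) zonalMeasure
  · have hcard : (Fintype.card ι : ℝ) = 3 := by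
      simp [← Module.finrank_eq_card_basis e.toBasis]
    have hleading : ∑ i, ((momentumTransfer b *
        (r ^ 2 / 8 * (energy F - 3 * secondMoment F (e i))) : ℝ) : ℂ) = 0 := by
      rw [← Complex.ofReal_sum, ← Finset.mul_sum, ← Finset.mul_sum, Finset.sum_sub_distrib,
        ← Finset.mul_sum, ← energy_eq_sum_secondMoment e h.integrable_norm_sq, Finset.sum_const,
        Finset.card_univ, nsmul_eq_mul, hcard]
      simp
    rw [← add_zero (∑ i, _), ← hleading, ← Finset.sum_add_distrib]
    refine (norm_sum_le_of_le _ fun i _ => h.norm_integral_collisionIntegrand_add_le hb hr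
      (e.norm_eq_one i) (hint _) hconv).trans_eq ?_
    rw [Finset.sum_const, Finset.card_univ, nsmul_eq_mul, hcard]
    ring
  · simp only [h.charFn_eq_gaussianCharFn_of_not_integrable hb_meas hconv hint,
      integral_collisionIntegrand_gaussianCharFn b _ hr.le (e.norm_eq_one _), Finset.sum_const_zero,
      momentumTransfer, integral_undef hconv, mul_zero, zero_mul, norm_zero, le_refl]

theorem QuadraticBound.norm_sum_integral_collisionIntegrand_div_sq_le_energyModulus
    (h : QuadraticBound C (charFn F)) (hb_meas : Measurable b) (hb : ∀ x, 0 ≤ b x)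
    (hint : ∀ ξ, Integrable (collisionIntegrand b (charFn F) ξ) sphereMeasure) (hr : 0 < r)
    (e : OrthonormalBasis ι ℝ E3) :
    ‖(∑ i, ∫ σ, collisionIntegrand b (charFn F) (r • e i) σ ∂sphereMeasure) / (r : ℂ) ^ 2‖
      ≤ 3 / 4 * momentumTransfer b * (4 * energyModulus F r + C ^ 2 * r ^ 2) := by
  rw [norm_div, norm_pow, Complex.norm_real, Real.norm_of_nonneg hr.le,
    div_le_iff₀' (by positivity)]
  exact h.norm_sum_integral_collisionIntegrand_le hb_meas hb hint hr e

theorem QuadraticBound.norm_sum_integral_collisionIntegrand_div_sq_le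
    (h : QuadraticBound C (charFn F)) (hb_meas : Measurable b) (hb : ∀ x, 0 ≤ b x)
    (hint : ∀ ξ, Integrable (collisionIntegrand b (charFn F) ξ) sphereMeasure) (hr : 0 < r)
    (hr1 : r ≤ 1) (e : OrthonormalBasis ι ℝ E3) :
    ‖(∑ i, ∫ σ, collisionIntegrand b (charFn F) (r • e i) σ ∂sphereMeasure) / (r : ℂ) ^ 2‖
      ≤ 3 / 4 * momentumTransfer b * (24 * C + C ^ 2) := by
  have hmod : energyModulus F r ≤ 6 * C :=
    (energyModulus_le_energy h.integrable_norm_sq hr.le).trans h.energy_le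
  have hsq : C ^ 2 * r ^ 2 ≤ C ^ 2 :=
    mul_le_of_le_one_right (sq_nonneg C) (pow_le_one₀ hr.le hr1)
  refine (h.norm_sum_integral_collisionIntegrand_div_sq_le_energyModulus hb_meas hb hint hr
    e).trans (mul_le_mul_of_nonneg_left (by linarith) ?_)
  exact mul_nonneg (by norm_num) (momentumTransfer_nonneg hb)

theorem QuadraticBound.tendsto_sum_integral_collisionIntegrand_div_sq
    (h : QuadraticBound C (charFn F)) (hb_meas : Measurable b) (hb : ∀ x, 0 ≤ b x)
    (hint : ∀ ξ, Integrable (collisionIntegrand b (charFn F) ξ) sphereMeasure)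
    (e : OrthonormalBasis ι ℝ E3) :
    Tendsto (fun r : ℝ =>
      (∑ i, ∫ σ, collisionIntegrand b (charFn F) (r • e i) σ ∂sphereMeasure) / (r : ℂ) ^ 2)
      (𝓝[>] 0) (𝓝 0) := by
  have hpow : Tendsto (fun r : ℝ => C ^ 2 * r ^ 2) (𝓝[>] 0) (𝓝 0) :=
    (Continuous.tendsto' (by fun_prop) 0 0 (by simp)).mono_left nhdsWithin_le_nhds
  have hmod := (tendsto_energyModulus h.integrable_norm_sq).mono_left
    (nhdsWithin_mono 0 Ioi_subset_Ici_self)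
  refine squeeze_zero_norm' (eventually_mem_nhdsWithin.mono fun r hr =>
    h.norm_sum_integral_collisionIntegrand_div_sq_le_energyModulus hb_meas hb hint hr e) ?_
  simpa using ((hmod.const_mul 4).add hpow).const_mul (3 / 4 * momentumTransfer b)

end OrthonormalSum

theorem tendsto_sub_of_dominated_deriv {E : Type*} [NormedAddCommGroup E] [NormedSpace ℝ E]
    [CompleteSpace E] {ι : Type*} {l : Filter ι} [l.IsCountablyGenerated] {a b : ℝ} (hab : a ≤ b)
    {f f' : ι → ℝ → E} (bound : ℝ) (hcont : ∀ i, ContinuousOn (f i) (Icc a b))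
    (hderiv : ∀ i, ∀ s ∈ Ioo a b, HasDerivAt (f i) (f' i s) s)
    (hbound : ∀ᶠ i in l, ∀ s ∈ Ioo a b, ‖f' i s‖ ≤ bound)
    (hlim : ∀ s ∈ Ioo a b, Tendsto (fun i => f' i s) l (𝓝 0)) :
    Tendsto (fun i => f i b - f i a) l (𝓝 0) := by
  have hmeas : ∀ i, AEStronglyMeasurable (f' i) (volume.restrict (Ioo a b)) := fun i =>
    (aestronglyMeasurable_deriv (f i) _).congr <|
      (ae_restrict_mem measurableSet_Ioo).mono fun s hs => (hderiv i s hs).deriv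
  have hint := tendsto_integral_filter_of_dominated_convergence (fun _ => bound)
    (.of_forall hmeas)
    (hbound.mono fun i hi => (ae_restrict_mem measurableSet_Ioo).mono hi)
    (integrable_const bound) ((ae_restrict_mem measurableSet_Ioo).mono hlim)
  rw [integral_zero] at hint
  refine hint.congr' (hbound.mono fun i hi => ?_)
  rw [← integral_Ioc_eq_integral_Ioo, ← intervalIntegral.integral_of_le hab]
  refine intervalIntegral.integral_eq_sub_of_hasDerivAt_of_le hab (hcont i) (hderiv i) ?_
  rw [intervalIntegrable_iff_integrableOn_Ioo_of_le hab]
  exact .of_bound measure_Ioo_lt_top (hmeas i) bound ((ae_restrict_mem measurableSet_Ioo).mono hi)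

section Frame

variable {ι : Type*} [Fintype ι]

theorem QuadraticBound.tendsto_sum_charFn_sub_div_sq {F : Measure E3} [IsProbabilityMeasure F]
    {C : ℝ} (h : QuadraticBound C (charFn F)) (e : OrthonormalBasis ι ℝ E3) :
    Tendsto (fun r : ℝ => (∑ i, (charFn F (r • e i) - 1)) / (r : ℂ) ^ 2) (𝓝[≠] 0)
      (𝓝 ((-(energy F / 2) : ℝ) : ℂ)) := by
  have hrem : ∀ i, Tendsto (fun r : ℝ => charFnRemainder F (r • e i) / (r : ℂ) ^ 2) (𝓝[≠] 0)
      (𝓝 0) := fun i => by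
    have hcomp := (isLittleO_charFnRemainder h.integrable_norm_sq).comp_tendsto
      (show Tendsto (fun r : ℝ => r • e i) (𝓝[≠] 0) (𝓝 0) from
        (Continuous.tendsto' (by fun_prop) 0 0 (by simp)).mono_left nhdsWithin_le_nhds)
    refine tendsto_zero_iff_norm_tendsto_zero.2 (hcomp.norm_left.tendsto_div_nhds_zero.congr ?_)
    intro r
    simp [norm_smul]
  have hsum := (tendsto_finsetSum Finset.univ fun i _ => hrem i).sub_const
    (((energy F / 2 : ℝ)) : ℂ)
  rw [Finset.sum_const_zero, zero_sub, ← Complex.ofReal_neg] at hsum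
  refine hsum.congr' (eventually_mem_nhdsWithin.mono fun r hr => ?_)
  have hr' : (r : ℂ) ≠ 0 := Complex.ofReal_ne_zero.2 hr
  rw [energy_eq_sum_secondMoment e h.integrable_norm_sq, ← Finset.sum_div,
    eq_div_iff (pow_ne_zero 2 hr'), sub_mul, div_mul_cancel₀ _ (pow_ne_zero 2 hr')]
  simp only [h.charFn_sub_one_eq, secondMoment_smul, Finset.sum_sub_distrib]
  push_cast
  rw [← Finset.sum_div, ← Finset.mul_sum]
  ring

end Frame

section Solution

variable {φ φ' : E3 → ℂ} {b : ℝ → ℝ} {ψ : ℝ → E3 → ℂ} {ψ₀ : E3 → ℂ} {F : ℝ → Measure E3}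
  {C t : ℝ}

theorem KBdd.norm_sub_le {α : ℝ} (h : KBdd α φ) (h' : KBdd α φ') {ξ : E3} (hξ : ξ ≠ 0) :
    ‖φ ξ - φ' ξ‖ ≤ Kdist α φ φ' * ‖ξ‖ ^ α := by
  obtain ⟨C, hC⟩ := h
  obtain ⟨C', hC'⟩ := h'
  have hpow : ∀ η : E3, η ≠ 0 → 0 < ‖η‖ ^ α := fun η hη =>
    Real.rpow_pos_of_pos (norm_pos_iff.2 hη) α
  have hbdd : BddAbove (range fun ξ : {ξ : E3 // ξ ≠ 0} => ‖φ ξ - φ' ξ‖ / ‖(ξ : E3)‖ ^ α) := by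
    refine ⟨C + C', ?_⟩
    rintro _ ⟨⟨η, hη⟩, rfl⟩
    rw [div_le_iff₀ (hpow η hη), add_mul, ← sub_sub_sub_cancel_right (φ η) (φ' η) 1]
    exact norm_sub_le_of_le (hC η hη) (hC' η hη)
  exact (div_le_iff₀ (hpow ξ hξ)).1 (le_ciSup hbdd ⟨ξ, hξ⟩)

theorem KContinuous.exists_quadraticBound (hψc : KContinuous 2 ψ) (hψK : ∀ s ≥ 0, KBdd 2 (ψ s))
    (hψ0 : ∀ s ≥ 0, ψ s 0 = 1) (t : ℝ) : ∃ C, ∀ s ∈ Icc 0 t, QuadraticBound C (ψ s) := by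
  have hmono : ∀ {C C' : ℝ} {φ : E3 → ℂ}, C ≤ C' → QuadraticBound C φ → QuadraticBound C' φ :=
    fun hC h ξ => (h ξ).trans (by gcongr)
  refine (isCompact_Icc (a := (0 : ℝ)) (b := t)).induction_on
    (p := fun S => ∃ C, ∀ s ∈ S ∩ Ici 0, QuadraticBound C (ψ s)) ⟨0, by simp⟩
    (fun S T hST ⟨C, hC⟩ => ⟨C, fun s hs => hC s ⟨hST hs.1, hs.2⟩⟩) ?_ (fun s hs => ?_)
    |>.imp fun C hC s hs => hC s ⟨hs, hs.1⟩
  · rintro S T ⟨C, hC⟩ ⟨C', hC'⟩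
    refine ⟨max C C', fun s hs => hs.1.elim (fun hS => ?_) fun hT => ?_⟩
    · exact hmono (le_max_left _ _) (hC s ⟨hS, hs.2⟩)
    · exact hmono (le_max_right _ _) (hC' s ⟨hT, hs.2⟩)
  · obtain ⟨C, hC⟩ := (hψK s hs.1).exists_quadraticBound (hψ0 s hs.1)
    refine ⟨_, nhdsWithin_mono s Icc_subset_Ici_self
      ((hψc s hs.1).eventually (gt_mem_nhds zero_lt_one)), 1 + C, fun u ⟨hu, hu0⟩ ξ => ?_⟩
    obtain rfl | hξ := eq_or_ne ξ 0
    · simp [hψ0 u hu0]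
    have hdist := (hψK u hu0).norm_sub_le (hψK s hs.1) hξ
    rw [Real.rpow_two] at hdist
    calc ‖ψ u ξ - 1‖ = ‖ψ u ξ - ψ s ξ + (ψ s ξ - 1)‖ := by rw [sub_add_sub_cancel]
      _ ≤ Kdist 2 (ψ u) (ψ s) * ‖ξ‖ ^ 2 + C * ‖ξ‖ ^ 2 := norm_add_le_of_le hdist (hC ξ)
      _ ≤ (1 + C) * ‖ξ‖ ^ 2 := by
        rw [← add_mul]
        gcongr
        exact hu.le

theorem IsBobylevSolution.integrable_collisionIntegrand (hψ : IsBobylevSolution b ψ ψ₀)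
    (ht : 0 ≤ t) (ξ : E3) : Integrable (collisionIntegrand b (ψ t) ξ) sphereMeasure :=
  measurableEmbedding_sphere_coe.integrable_map_iff.2
    ((hψ.integrable t ht ξ).congr (ae_of_all _ fun σ => (collisionIntegrand_coe b ψ t ξ σ).symm))

theorem IsBobylevSolution.hasDerivWithinAt (hψ : IsBobylevSolution b ψ ψ₀) (ht : 0 ≤ t) (ξ : E3) :
    HasDerivWithinAt (fun τ => ψ τ ξ) (∫ σ, collisionIntegrand b (ψ t) ξ σ ∂sphereMeasure)
      (Ici 0) t := by
  rw [sphereMeasure, measurableEmbedding_sphere_coe.integral_map]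
  simp only [collisionIntegrand_coe]
  exact hψ.eq t ht ξ

theorem IsBobylevSolution.energy_eq (hψ : IsBobylevSolution b ψ ψ₀) (hb_meas : Measurable b)
    (hb : ∀ x, 0 ≤ b x) [hF : ∀ t, IsProbabilityMeasure (F t)]
    (hψF : ∀ t ≥ 0, ψ t = charFn (F t)) (ht : 0 ≤ t)
    (hC : ∀ s ∈ Icc 0 t, QuadraticBound C (charFn (F s))) : energy (F t) = energy (F 0) := by
  let e := EuclideanSpace.basisFun (Fin 3) ℝ
  let f : ℝ → ℝ → ℂ := fun r s => (∑ i, (ψ s (r • e i) - 1)) / (r : ℂ) ^ 2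
  have hint : ∀ s ≥ 0, ∀ ξ, Integrable (collisionIntegrand b (charFn (F s)) ξ) sphereMeasure :=
    fun s hs => hψF s hs ▸ hψ.integrable_collisionIntegrand hs
  have hderiv : ∀ r, ∀ s ≥ 0, HasDerivWithinAt (f r)
      ((∑ i, ∫ σ, collisionIntegrand b (charFn (F s)) (r • e i) σ ∂sphereMeasure) / (r : ℂ) ^ 2)
      (Ici 0) s := fun r s hs =>
    hψF s hs ▸ (HasDerivWithinAt.fun_sum fun i _ =>
      (hψ.hasDerivWithinAt hs (r • e i)).sub_const 1).div_const _
  have hzero : Tendsto (fun r => f r t - f r 0) (𝓝[>] 0) (𝓝 0) := by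
    refine tendsto_sub_of_dominated_deriv ht (3 / 4 * momentumTransfer b * (24 * C + C ^ 2))
      (fun r s hs => ((hderiv r s hs.1).mono Icc_subset_Ici_self).continuousWithinAt)
      (fun r s hs => (hderiv r s hs.1.le).hasDerivAt (Ici_mem_nhds hs.1)) ?_ fun s hs => ?_
    · filter_upwards [Ioo_mem_nhdsGT zero_lt_one] with r hr s hs
      exact (hC s ⟨hs.1.le, hs.2.le⟩).norm_sum_integral_collisionIntegrand_div_sq_le hb_meas hb
        (hint s hs.1.le) hr.1 hr.2.le e
    · exact (hC s ⟨hs.1.le, hs.2.le⟩).tendsto_sum_integral_collisionIntegrand_div_sq hb_meas hb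
        (hint s hs.1.le) e
  have hlim : ∀ s ∈ Icc 0 t, Tendsto (fun r => f r s) (𝓝[>] 0)
      (𝓝 ((-(energy (F s) / 2) : ℝ) : ℂ)) := fun s hs => by
    simp only [f, hψF s hs.1]
    exact ((hC s hs).tendsto_sum_charFn_sub_div_sq e).mono_left
      (nhdsWithin_mono 0 fun r hr => hr.ne')
  have heq := tendsto_nhds_unique hzero
    ((hlim t ⟨ht, le_rfl⟩).sub (hlim 0 ⟨le_rfl, ht⟩))
  rw [eq_comm, ← Complex.ofReal_sub, Complex.ofReal_eq_zero] at heq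
  linarith

end Solution

theorem energy_inequality_conservation_general (b : ℝ → ℝ) (hb_meas : Measurable b)
    (hb_nonneg : ∀ x, 0 ≤ b x) (F : ℝ → Measure E3) (hFprob : ∀ t, IsProbabilityMeasure (F t))
    (ψ : ℝ → E3 → ℂ) (hψch : ∀ t ≥ 0, ψ t = charFn (F t))
    (hψ : IsBobylevSolution b ψ (charFn (F 0))) (hψK : ∀ t ≥ 0, KBdd 2 (ψ t))
    (hψc : KContinuous 2 ψ) :
    ∀ t ≥ 0, ∫⁻ v, ENNReal.ofReal (‖v‖ ^ 2) ∂(F t) = ∫⁻ v, ENNReal.ofReal (‖v‖ ^ 2) ∂(F 0) := by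
  intro t ht
  obtain ⟨C, hC⟩ := hψc.exists_quadraticBound hψK (fun s hs => by rw [hψch s hs, charFn_zero]) t
  replace hC : ∀ s ∈ Icc 0 t, QuadraticBound C (charFn (F s)) := fun s hs =>
    hψch s hs.1 ▸ hC s hs
  rw [lintegral_norm_sq_eq_ofReal_energy (hC t ⟨ht, le_rfl⟩).integrable_norm_sq,
    lintegral_norm_sq_eq_ofReal_energy (hC 0 ⟨le_rfl, ht⟩).integrable_norm_sq,
    hψ.energy_eq hb_meas hb_nonneg hψch ht hC]

/-- energy inequality, and energy conservation in the mild
singularity case `α₀ ≤ 1`. -/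
theorem energy_inequality_conservation
    (b : ℝ → ℝ) (hb_meas : Measurable b) (hb_nonneg : ∀ x, 0 ≤ b x)
    (α₀ : ℝ) (hα₀0 : 0 < α₀) (hα₀2 : α₀ ≤ 2)
    (hint : (∫⁻ θ : ℝ in Set.Ioc 0 (π/2),
        ENNReal.ofReal (Real.sin (θ/2) ^ α₀ * b (Real.cos θ) * Real.sin θ)) < ⊤)
    (F : ℝ → Measure E3) (hFprob : ∀ t, IsProbabilityMeasure (F t))
    (hmom2 : (∫⁻ v, ENNReal.ofReal (‖v‖ ^ 2) ∂(F 0)) < ⊤)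
    (ψ : ℝ → E3 → ℂ) (hψch : ∀ t ≥ 0, ψ t = charFn (F t))
    (hψ : IsBobylevSolution b ψ (charFn (F 0)))
    (hψK : ∀ t ≥ 0, KBdd 2 (ψ t)) (hψc : KContinuous 2 ψ) :
    ∀ t > (0:ℝ),
      ((∫⁻ v, ENNReal.ofReal (‖v‖ ^ 2) ∂(F t)) ≤ ∫⁻ v, ENNReal.ofReal (‖v‖ ^ 2) ∂(F 0))
      ∧ (α₀ ≤ 1 →
        (∫⁻ v, ENNReal.ofReal (‖v‖ ^ 2) ∂(F t)) = ∫⁻ v, ENNReal.ofReal (‖v‖ ^ 2) ∂(F 0)) := by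
  intro t ht
  have heq := energy_inequality_conservation_general b hb_meas hb_nonneg F hFprob ψ hψch hψ hψK hψc
  exact ⟨(heq t ht.le).le, fun _ => heq t ht.le⟩
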